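/- arXiv:1609.07295 — 5 statements merged into one kernel-verified Lean document; each statement's English description precedes it below -/
import Mathlib

section
/- Let p(X) = X^4 + X^3 - X + 1 and p*(X) = X^4 - X^3 + X + 1 (its reciprocal). Then the set of Borwein polynomials of degree at most 4 that do not divide any Littlewood polynomial is exactly {p(X), -p(X), p*(X), -p*(X)}. In particular, every Borwein polynomial of degree at most 3 divides some Littlewood polynomial, and X^4 + X^3 - X + 1 is a smallest-degree Borwein polynomial with no Littlewood multiple. -/
open Polynomial

/-- A Borwein polynomial: all coefficients in {-1,0,1} and nonzero constant term. -/
def IsBorwein (P : Polynomial ℤ) : Prop :=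
  (∀ i, P.coeff i ∈ ({-1, 0, 1} : Set ℤ)) ∧ P.coeff 0 ≠ 0

/-- A Littlewood polynomial: all coefficients of X^0,...,X^(deg) lie in {-1,1}. -/
def IsLittlewood (L : Polynomial ℤ) : Prop :=
  ∀ i ≤ L.natDegree, L.coeff i ∈ ({-1, 1} : Set ℤ)

/-!
Write `p = X⁴ + X³ - X + 1`. If `p * Q` is a Littlewood polynomial, then the identity

`(1 + 2X + 2X² + X³ - 2X⁴ + 2X⁵ - X⁶) * p = 8X⁵ + (1 + X + X⁹ - X¹⁰)`,

whose right-hand side has a dominant coefficient, forces every coefficient of `Q` into `[-2, 2]`.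
The coefficients of `Q` satisfy a linear recurrence driven by the signs of `p * Q`. No choice of
the first thirteen signs keeps them in `[-2, 2]`, and no shorter choice brings the recurrence back
to zero, as the end of `Q` requires. The substitution `X ↦ -X` transfers this to `p*`. All other
Borwein polynomials of degree at most four have an explicit Littlewood multiple.
-/

section Coefficients

variable {R : Type*}

/-- The polynomial with a given list of coefficients, constant term first. Trailing zeros are
allowed, so the degree may be smaller than the length suggests. -/
noncomputable def ofCoeffs [Semiring R] : List R → R[X]
  | [] => 0
  | a :: l => C a + X * ofCoeffs l

lemma coeff_ofCoeffs [Semiring R] (l : List R) (n : ℕ) : (ofCoeffs l).coeff n = l.getD n 0 := by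
  induction l generalizing n with
  | nil => simp [ofCoeffs]
  | cons a l ih => cases n <;> simp [ofCoeffs, ih]

lemma natDegree_ofCoeffs_le [Semiring R] (l : List R) : (ofCoeffs l).natDegree ≤ l.length :=
  natDegree_le_iff_coeff_eq_zero.mpr fun n hn => by
    rw [coeff_ofCoeffs, List.getD_eq_default _ _ hn.le]

lemma ofCoeffs_map_coeff_range [Semiring R] {P : R[X]} {n : ℕ} (hP : P.natDegree < n) :
    ofCoeffs ((List.range n).map P.coeff) = P := by
  ext i
  rw [coeff_ofCoeffs]
  rcases lt_or_ge i n with hi | hi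
  · simp [hi]
  · rw [List.getD_eq_default _ _ (by simpa using hi),
      coeff_eq_zero_of_natDegree_lt (hP.trans_le hi)]

/-- The `n`-th coefficient of `ofCoeffs k * ofCoeffs l`, as a computable function of the lists. -/
def convolution [Semiring R] (k l : List R) (n : ℕ) : R :=
  ∑ ij ∈ Finset.HasAntidiagonal.antidiagonal n, k.getD ij.1 0 * l.getD ij.2 0

lemma coeff_ofCoeffs_mul_ofCoeffs [Semiring R] (k l : List R) (n : ℕ) :
    (ofCoeffs k * ofCoeffs l).coeff n = convolution k l n := by
  simp only [coeff_mul, coeff_ofCoeffs, convolution]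

lemma exists_forall_abs_coeff_le [Ring R] [LinearOrder R] [IsOrderedAddMonoid R] (Q : R[X]) :
    ∃ m, ∀ n, |Q.coeff n| ≤ |Q.coeff m| := by
  obtain ⟨m, -, hm⟩ := Finset.exists_max_image (Finset.range (Q.natDegree + 1))
    (fun n => |Q.coeff n|) ⟨0, by simp⟩
  refine ⟨m, fun n => ?_⟩
  rcases le_or_gt n Q.natDegree with hn | hn
  · exact hm n (Finset.mem_range_succ_iff.mpr hn)
  · simp [coeff_eq_zero_of_natDegree_lt hn]

variable [Ring R] [LinearOrder R] [IsOrderedRing R]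

lemma abs_coeff_ofCoeffs_mul_le (l : List R) {L : R[X]} {c : R} (hL : ∀ n, |L.coeff n| ≤ c)
    (n : ℕ) : |(ofCoeffs l * L).coeff n| ≤ (l.map abs).sum * c := by
  induction l generalizing n with
  | nil => simp [ofCoeffs]
  | cons a l ih =>
    have shifted : |(X * (ofCoeffs l * L)).coeff n| ≤ (l.map abs).sum * c := by
      cases n with
      | zero => simpa using (abs_nonneg _).trans (ih 0)
      | succ n => simpa using ih n
    calc |(ofCoeffs (a :: l) * L).coeff n|
        = |a * L.coeff n + (X * (ofCoeffs l * L)).coeff n| := by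
          rw [ofCoeffs, add_mul, mul_assoc, coeff_add, coeff_C_mul]
      _ ≤ |a| * |L.coeff n| + |(X * (ofCoeffs l * L)).coeff n| := by
          rw [← abs_mul]; exact abs_add_le _ _
      _ ≤ |a| * c + (l.map abs).sum * c := by gcongr; exact hL n
      _ = ((a :: l).map abs).sum * c := by simp [add_mul]

/-- The multiplier `f` turns `P` into a polynomial with one dominant coefficient `a`, at which a
coefficient of `Q` of maximal absolute value can be read off. -/
lemma abs_coeff_cofactor_le {P Q : R[X]} {f e : List R} {a c : R} {m : ℕ}
    (hf : ofCoeffs f * P = C a * X ^ m + ofCoeffs e) (ha : (e.map abs).sum ≤ |a|)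
    (hPQ : ∀ n, |(P * Q).coeff n| ≤ c) (n : ℕ) :
    (|a| - (e.map abs).sum) * |Q.coeff n| ≤ (f.map abs).sum * c := by
  obtain ⟨k, hk⟩ := exists_forall_abs_coeff_le Q
  have product_eq : C a * (X ^ m * Q) = ofCoeffs f * (P * Q) - ofCoeffs e * Q := by
    rw [← mul_assoc, eq_sub_of_add_eq hf.symm, sub_mul, mul_assoc]
  have coeff_eq : a * Q.coeff k =
      (ofCoeffs f * (P * Q)).coeff (k + m) - (ofCoeffs e * Q).coeff (k + m) := by
    rw [← coeff_sub, ← product_eq, coeff_C_mul, coeff_X_pow_mul]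
  have bound_max : |a| * |Q.coeff k| ≤ (f.map abs).sum * c + (e.map abs).sum * |Q.coeff k| :=
    calc |a| * |Q.coeff k|
        = |(ofCoeffs f * (P * Q)).coeff (k + m) - (ofCoeffs e * Q).coeff (k + m)| := by
          rw [← abs_mul, coeff_eq]
      _ ≤ |(ofCoeffs f * (P * Q)).coeff (k + m)| + |(ofCoeffs e * Q).coeff (k + m)| := abs_sub _ _
      _ ≤ (f.map abs).sum * c + (e.map abs).sum * |Q.coeff k| :=
          add_le_add (abs_coeff_ofCoeffs_mul_le f hPQ _) (abs_coeff_ofCoeffs_mul_le e hk _)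
  calc (|a| - (e.map abs).sum) * |Q.coeff n|
      ≤ (|a| - (e.map abs).sum) * |Q.coeff k| :=
        mul_le_mul_of_nonneg_left (hk n) (sub_nonneg.mpr ha)
    _ ≤ (f.map abs).sum * c := by rw [sub_mul]; exact sub_le_iff_le_add.mpr bound_max

end Coefficients

lemma IsBorwein.neg {P : ℤ[X]} (hP : IsBorwein P) : IsBorwein (-P) := by
  refine ⟨fun i => ?_, by simpa using hP.2⟩
  rcases hP.1 i with h | h | h <;> simp_all

lemma IsBorwein.coeff_zero_eq_one_or_neg_one {P : ℤ[X]} (hP : IsBorwein P) :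
    P.coeff 0 = 1 ∨ P.coeff 0 = -1 := by
  rcases hP.1 0 with h | h | h
  · exact .inr h
  · exact absurd h hP.2
  · exact .inl h

lemma isBorwein_ofCoeffs {l : List ℤ} (hl : ∀ a ∈ l, a ∈ ({-1, 0, 1} : Set ℤ))
    (h0 : l.getD 0 0 ≠ 0) : IsBorwein (ofCoeffs l) := by
  refine ⟨fun i => ?_, by rwa [coeff_ofCoeffs]⟩
  rw [coeff_ofCoeffs]
  rcases lt_or_ge i l.length with hi | hi
  · rw [List.getD_eq_getElem _ _ hi]
    exact hl _ (List.getElem_mem hi)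
  · rw [List.getD_eq_default _ _ hi]
    simp

lemma IsLittlewood.abs_coeff_le_one {L : ℤ[X]} (hL : IsLittlewood L) (n : ℕ) :
    |L.coeff n| ≤ 1 := by
  rcases le_or_gt n L.natDegree with hn | hn
  · rcases hL n hn with h | h <;> simp_all
  · simp [coeff_eq_zero_of_natDegree_lt hn]

lemma isLittlewood_of_antitone_abs_coeff {L : ℤ[X]} (h0 : |L.coeff 0| = 1)
    (hL : Antitone fun n => |L.coeff n|) : IsLittlewood L := by
  intro n hn
  have L_ne_zero : L ≠ 0 := by rintro rfl; simp at h0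
  have one_le : 1 ≤ |L.coeff n| :=
    (Int.one_le_abs (leadingCoeff_ne_zero.mpr L_ne_zero)).trans (hL hn)
  have le_one : |L.coeff n| ≤ 1 := (hL n.zero_le).trans_eq h0
  simpa [or_comm] using eq_or_eq_neg_of_abs_eq (le_one.antisymm one_le)

lemma IsLittlewood.comp_neg_X {L : ℤ[X]} (hL : IsLittlewood L) : IsLittlewood (L.comp (-X)) := by
  intro n hn
  have coeff_eq : (L.comp (-X)).coeff n = L.coeff n * (-1) ^ n := by
    rw [← comp_C_mul_X_coeff]; simp
  rw [natDegree_comp, natDegree_neg, natDegree_X, mul_one] at hn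
  rw [coeff_eq]
  rcases hL n hn with h | h <;> rcases neg_one_pow_eq_or ℤ n with hs | hs <;> simp_all

/-- `P` divides some Littlewood polynomial. -/
def HasLittlewoodMultiple (P : ℤ[X]) : Prop :=
  ∃ L : ℤ[X], IsLittlewood L ∧ P ∣ L

lemma hasLittlewoodMultiple_neg {P : ℤ[X]} :
    HasLittlewoodMultiple (-P) ↔ HasLittlewoodMultiple P := by
  simp only [HasLittlewoodMultiple, neg_dvd]

lemma HasLittlewoodMultiple.comp_neg_X {P : ℤ[X]} (hP : HasLittlewoodMultiple P) :
    HasLittlewoodMultiple (P.comp (-X)) := by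
  obtain ⟨L, hL, hPL⟩ := hP
  exact ⟨L.comp (-X), hL.comp_neg_X, map_dvd (compRingHom (-X)) hPL⟩

section Multiples

/-- A decidable criterion for `ofCoeffs k * ofCoeffs l` to be Littlewood: the absolute values of its
coefficients must read `1, …, 1, 0, …, 0`. -/
abbrev IsLittlewoodConvolution (k l : List ℤ) : Prop :=
  |convolution k l 0| = 1 ∧
    ∀ n < k.length + l.length, |convolution k l (n + 1)| ≤ |convolution k l n|

lemma IsLittlewoodConvolution.isLittlewood {k l : List ℤ} (h : IsLittlewoodConvolution k l) :
    IsLittlewood (ofCoeffs k * ofCoeffs l) := by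
  simp only [IsLittlewoodConvolution, ← coeff_ofCoeffs_mul_ofCoeffs] at h
  refine isLittlewood_of_antitone_abs_coeff h.1 (antitone_nat_of_succ_le fun n => ?_)
  rcases lt_or_ge n (k.length + l.length) with hn | hn
  · exact h.2 n hn
  · have natDegree_le : (ofCoeffs k * ofCoeffs l).natDegree ≤ k.length + l.length :=
      natDegree_mul_le.trans (add_le_add (natDegree_ofCoeffs_le k) (natDegree_ofCoeffs_le l))
    rw [coeff_eq_zero_of_natDegree_lt (by omega), abs_zero]
    exact abs_nonneg _

/-- Coefficient lists, found by computer search, of cofactors which turn the Borwein polynomials of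
degree at most four with constant term `1`, other than the two exceptions, into Littlewood
polynomials. -/
def cofactors : List (List ℤ) :=
  [[1], [1, -1], [1, -1, -1], [1, -1, -1, -1], [1, 0, -1, -1], [1, -1, 0, -1], [1, 0, -1, 1],
   [1, -1, 0, 1], [1, 0, -1, -1, 1, 1, 0, -1], [1, 0, -1, 1, 1, -1, 0, 1],
   [1, 0, 0, -1, 1, -1, 1, 0, 1, -1], [1, 0, 0, 1, 1, 1, 1, 0, 1, 1],
   [1, -1, 0, -1, 1, -1, 1, 0, 0, -1], [1, 1, 0, 1, 1, 1, 1, 0, 0, 1],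
   [1, 0, 0, -1, -1, 1, 1, 0, -1, -1], [1, -1, 0, 1, -1, -1, 1, 0, 0, 1],
   [1, 0, -1, 0, 0, -1, -1, 0, -1, -1, -1], [1, -1, 1, 0, -1, 1, 0, 0, 1, 0, -1],
   [1, 0, -1, 0, 0, 1, -1, 0, -1, 1, -1], [1, -1, -1, 0, 1, -1, 0, 0, 1, 0, -1]]

lemma exists_cofactor_or_exceptional :
    ∀ b ∈ [(-1 : ℤ), 0, 1], ∀ c ∈ [(-1 : ℤ), 0, 1], ∀ d ∈ [(-1 : ℤ), 0, 1],
      ∀ e ∈ [(-1 : ℤ), 0, 1],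
        (∃ q ∈ cofactors, IsLittlewoodConvolution [1, b, c, d, e] q) ∨
          [1, b, c, d, e] = [1, -1, 0, 1, 1] ∨ [1, b, c, d, e] = [1, 1, 0, -1, 1] := by
  decide +kernel

lemma ofCoeffs_exceptional : ofCoeffs [1, -1, 0, 1, 1] = (X ^ 4 + X ^ 3 - X + 1 : ℤ[X]) := by
  simp only [ofCoeffs, map_neg, map_one, map_zero]; ring

lemma ofCoeffs_exceptional_reciprocal :
    ofCoeffs [1, 1, 0, -1, 1] = (X ^ 4 - X ^ 3 + X + 1 : ℤ[X]) := by
  simp only [ofCoeffs, map_neg, map_one, map_zero]; ring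

lemma IsBorwein.hasLittlewoodMultiple_or_exceptional {P : ℤ[X]} (hP : IsBorwein P)
    (hdeg : P.natDegree ≤ 4) (h0 : P.coeff 0 = 1) :
    HasLittlewoodMultiple P ∨ P = X ^ 4 + X ^ 3 - X + 1 ∨ P = X ^ 4 - X ^ 3 + X + 1 := by
  have hmem (i : ℕ) : P.coeff i ∈ [(-1 : ℤ), 0, 1] := by simpa using hP.1 i
  have hcoeffs : ofCoeffs [1, P.coeff 1, P.coeff 2, P.coeff 3, P.coeff 4] = P := by
    rw [← h0]; exact ofCoeffs_map_coeff_range (Nat.lt_succ_of_le hdeg)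
  rcases exists_cofactor_or_exceptional _ (hmem 1) _ (hmem 2) _ (hmem 3) _ (hmem 4) with
    ⟨q, -, hq⟩ | h | h
  · exact .inl ⟨_, hq.isLittlewood, ofCoeffs q, by rw [hcoeffs]⟩
  · exact .inr (.inl (by rw [← hcoeffs, h, ofCoeffs_exceptional]))
  · exact .inr (.inr (by rw [← hcoeffs, h, ofCoeffs_exceptional_reciprocal]))

end Multiples

section Exceptional

lemma abs_coeff_cofactor_exceptional_le_two {Q : ℤ[X]}
    (h : IsLittlewood ((X ^ 4 + X ^ 3 - X + 1) * Q)) (n : ℕ) : |Q.coeff n| ≤ 2 := by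
  have dominant : ofCoeffs [1, 2, 2, 1, -2, 2, -1] * (X ^ 4 + X ^ 3 - X + 1 : ℤ[X]) =
      C 8 * X ^ 5 + ofCoeffs [1, 1, 0, 0, 0, 0, 0, 0, 0, 1, -1] := by
    simp only [ofCoeffs, map_neg, map_one, map_zero, map_ofNat]; ring
  have bound := abs_coeff_cofactor_le dominant (by norm_num) h.abs_coeff_le_one n
  norm_num at bound
  omega

/-- The possible values of the window `(u (n + 3), u (n + 2), u (n + 1), u n)` of a sequence bounded
by `2` which starts with four zeros and satisfies `u (k + 4) = u (k + 3) - u (k + 1) - u k ± 1`. -/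
def windows : ℕ → Finset (ℤ × ℤ × ℤ × ℤ)
  | 0 => {(0, 0, 0, 0)}
  | n + 1 => ((windows n ×ˢ {1, -1}).image
      fun ((a, b, c, d), ε) => (a - c - d + ε, a, b, c)).filter fun s => |s.1| ≤ 2

lemma windows_thirteen_add_eq_empty (n : ℕ) : windows (13 + n) = ∅ := by
  induction n with
  | zero => decide +kernel
  | succ n ih => simp [windows, ih]

lemma zero_notMem_windows_succ (n : ℕ) : (0, 0, 0, 0) ∉ windows (n + 1) := by
  rcases lt_or_ge n 12 with hn | hn
  · have no_early_return : ∀ m < 12, (0, 0, 0, 0) ∉ windows (m + 1) := by decide +kernel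
    exact no_early_return n hn
  · obtain ⟨k, rfl⟩ := Nat.exists_eq_add_of_le hn
    rw [show 12 + k + 1 = 13 + k by omega, windows_thirteen_add_eq_empty]
    exact Finset.notMem_empty _

lemma mem_windows {u : ℕ → ℤ} {N : ℕ} (hzero : ∀ k < 4, u k = 0) (hbound : ∀ k, |u k| ≤ 2)
    (hrec : ∀ k < N, u k + u (k + 1) - u (k + 3) + u (k + 4) ∈ ({-1, 1} : Set ℤ)) :
    ∀ n ≤ N, (u (n + 3), u (n + 2), u (n + 1), u n) ∈ windows n := by
  intro n hn
  induction n with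
  | zero => simp [windows, hzero]
  | succ n ih =>
    refine Finset.mem_filter.mpr ⟨Finset.mem_image.mpr
      ⟨((u (n + 3), u (n + 2), u (n + 1), u n), u n + u (n + 1) - u (n + 3) + u (n + 4)),
        Finset.mem_product.mpr ⟨ih (by omega), ?_⟩, ?_⟩, hbound _⟩
    · simpa [or_comm] using hrec n hn
    · ext <;> simp only []; ring

lemma coeff_exceptional_mul (R : ℤ[X]) (k : ℕ) :
    ((X ^ 4 + X ^ 3 - X + 1) * R).coeff (k + 4) =
      R.coeff k + R.coeff (k + 1) - R.coeff (k + 3) + R.coeff (k + 4) := by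
  simp [add_mul, sub_mul, coeff_X_pow_mul']

lemma monic_exceptional : (X ^ 4 + X ^ 3 - X + 1 : ℤ[X]).Monic := by
  monicity!

lemma natDegree_exceptional : (X ^ 4 + X ^ 3 - X + 1 : ℤ[X]).natDegree = 4 := by
  compute_degree!

lemma natDegree_exceptional_reciprocal : (X ^ 4 - X ^ 3 + X + 1 : ℤ[X]).natDegree = 4 := by
  compute_degree!

lemma isBorwein_exceptional : IsBorwein (X ^ 4 + X ^ 3 - X + 1) := by
  rw [← ofCoeffs_exceptional]
  exact isBorwein_ofCoeffs (by simp) (by simp)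

lemma isBorwein_exceptional_reciprocal : IsBorwein (X ^ 4 - X ^ 3 + X + 1) := by
  rw [← ofCoeffs_exceptional_reciprocal]
  exact isBorwein_ofCoeffs (by simp) (by simp)

lemma not_hasLittlewoodMultiple_exceptional :
    ¬ HasLittlewoodMultiple (X ^ 4 + X ^ 3 - X + 1) := by
  rintro ⟨_, hL, Q, rfl⟩
  set L := (X ^ 4 + X ^ 3 - X + 1) * Q
  -- Shifting `Q` by four provides the initial zeros of the recurrence.
  set u : ℕ → ℤ := (X ^ 4 * Q).coeff with hu
  have u_zero : ∀ k < 4, u k = 0 := fun k hk => by simp [hu, coeff_X_pow_mul', hk.not_ge]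
  have u_bound (k : ℕ) : |u k| ≤ 2 := by
    rw [hu, coeff_X_pow_mul']
    split_ifs
    · exact abs_coeff_cofactor_exceptional_le_two hL _
    · simp
  have u_rec (k : ℕ) : u k + u (k + 1) - u (k + 3) + u (k + 4) = L.coeff k := by
    rw [← coeff_exceptional_mul, mul_left_comm, coeff_X_pow_mul]
  have u_end {k : ℕ} (hk : L.natDegree < k) : u k = 0 := by
    refine coeff_eq_zero_of_natDegree_lt (lt_of_le_of_lt ?_ hk)
    rcases eq_or_ne Q 0 with rfl | hQ
    · simp
    · rw [monic_exceptional.natDegree_mul' hQ, natDegree_exceptional, natDegree_X_pow_mul _ hQ,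
        add_comm]
  have last_window := mem_windows u_zero u_bound
    (fun k hk => by simpa [u_rec] using hL k (Nat.lt_succ_iff.mp hk)) (L.natDegree + 1) le_rfl
  rw [u_end (by omega), u_end (by omega), u_end (by omega), u_end (by omega)] at last_window
  exact zero_notMem_windows_succ _ last_window

lemma not_hasLittlewoodMultiple_exceptional_reciprocal :
    ¬ HasLittlewoodMultiple (X ^ 4 - X ^ 3 + X + 1) := by
  intro h
  have comp_eq : (X ^ 4 - X ^ 3 + X + 1 : ℤ[X]).comp (-X) = X ^ 4 + X ^ 3 - X + 1 := by
    simp only [sub_comp, add_comp, pow_comp, X_comp, one_comp]; ring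
  exact not_hasLittlewoodMultiple_exceptional (comp_eq ▸ h.comp_neg_X)

end Exceptional

/-- The set of Borwein polynomials of degree at most 4 with no Littlewood
multiple is exactly `{p, -p, p*, -p*}` where `p = X^4 + X^3 - X + 1` and
`p* = X^4 - X^3 + X + 1` is its reciprocal. -/
theorem borwein_deg_le_four_no_littlewood_multiple :
    {P : Polynomial ℤ | IsBorwein P ∧ P.natDegree ≤ 4 ∧
        ¬ ∃ L : Polynomial ℤ, IsLittlewood L ∧ P ∣ L} =
      {X ^ 4 + X ^ 3 - X + 1, -(X ^ 4 + X ^ 3 - X + 1),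
       X ^ 4 - X ^ 3 + X + 1, -(X ^ 4 - X ^ 3 + X + 1)} := by
  ext P
  constructor
  · rintro ⟨hP, hdeg, hnone⟩
    rcases hP.coeff_zero_eq_one_or_neg_one with h0 | h0
    · rcases hP.hasLittlewoodMultiple_or_exceptional hdeg h0 with h | rfl | rfl
      · exact absurd h hnone
      · simp
      · simp
    · rcases hP.neg.hasLittlewoodMultiple_or_exceptional (by rwa [natDegree_neg]) (by simp [h0])
        with h | h | h
      · exact absurd (hasLittlewoodMultiple_neg.mp h) hnone
      · simp [← h]
      · simp [← h]
  · rintro (rfl | rfl | rfl | rfl)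
    · exact ⟨isBorwein_exceptional, natDegree_exceptional.le,
        not_hasLittlewoodMultiple_exceptional⟩
    · exact ⟨isBorwein_exceptional.neg, by rw [natDegree_neg, natDegree_exceptional],
        hasLittlewoodMultiple_neg.not.mpr not_hasLittlewoodMultiple_exceptional⟩
    · exact ⟨isBorwein_exceptional_reciprocal, natDegree_exceptional_reciprocal.le,
        not_hasLittlewoodMultiple_exceptional_reciprocal⟩
    · exact ⟨isBorwein_exceptional_reciprocal.neg,
        by rw [natDegree_neg, natDegree_exceptional_reciprocal],
        hasLittlewoodMultiple_neg.not.mpr not_hasLittlewoodMultiple_exceptional_reciprocal⟩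
end

section
/- The Newman polynomial P(X) = X^{11} + X^{10} + X^9 + X^8 + X^7 + X^5 + X^4 + X^3 + 1 factors over ℤ as P(X) = (X^2 + X + 1)(X^4 + X^3 + 1)(X^5 - X^4 + X^3 - X + 1), and P(X) divides no Littlewood polynomial, even though each of the two noncyclotomic factors X^4 + X^3 + 1 and X^5 - X^4 + X^3 - X + 1 divides some Littlewood polynomial. -/
open Polynomial

/-- A Newman polynomial: all coefficients in {0,1} and constant term 1. -/
def IsNewman (P : Polynomial ℤ) : Prop :=
  (∀ i, P.coeff i ∈ ({0, 1} : Set ℤ)) ∧ P.coeff 0 = 1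

/-!
Already the noncyclotomic part `F = (X^4 + X^3 + 1)(X^5 - X^4 + X^3 - X + 1)` of the Newman
polynomial divides no Littlewood polynomial. `F` has no zero on the unit circle, so `1 / F` has a
Laurent expansion there with absolutely summable coefficients, of sum less than `4`. Hence if all
coefficients of `F * M` are at most `1` in absolute value, those of `M` are at most `3`; likewise,
for a short polynomial `U`, those of `U * M` are bounded by the sum of the absolute values of the
coefficients of `U / F`. If `F * M` is a Littlewood polynomial, nine consecutive coefficients of `M`
determine the next one up to two choices, so `M` is a walk in a finite graph from the window
`0, …, 0, ± 1` to the zero window. An exhaustive search through that graph dies out without ever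
meeting the zero window.
-/

theorem IsLittlewood.neg {L : ℤ[X]} (hL : IsLittlewood L) : IsLittlewood (-L) := by
  intro i hi
  rw [natDegree_neg] at hi
  rw [coeff_neg]
  rcases hL i hi with h | h <;> simp_all

theorem IsLittlewood.abs_coeff_le {L : ℤ[X]} (hL : IsLittlewood L) (k : ℕ) :
    |L.coeff k| ≤ 1 := by
  rcases le_or_gt k L.natDegree with hk | hk
  · obtain h | h : L.coeff k = -1 ∨ L.coeff k = 1 := hL k hk <;> simp [h]
  · simp [coeff_eq_zero_of_natDegree_lt hk]

namespace NewmanProduct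

section CoeffLists

variable {R : Type*}

/-- The polynomial with a given list of coefficients, constant term first. -/
noncomputable def ofCoeffs [Semiring R] (s : List R) : R[X] :=
  s.foldr (fun a p => C a + X * p) 0

/-- Addition of polynomials on coefficient lists. -/
def addCoeffs [Add R] : List R → List R → List R
  | [], t => t
  | a :: s, [] => a :: s
  | a :: s, b :: t => (a + b) :: addCoeffs s t

/-- Multiplication of polynomials on coefficient lists. -/
def mulCoeffs [Semiring R] : List R → List R → List R
  | [], _ => []
  | a :: s, t => addCoeffs (t.map (a * ·)) (0 :: mulCoeffs s t)

@[simp] theorem ofCoeffs_nil [Semiring R] : ofCoeffs ([] : List R) = 0 := rfl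

@[simp] theorem ofCoeffs_cons [Semiring R] (a : R) (s : List R) :
    ofCoeffs (a :: s) = C a + X * ofCoeffs s := rfl

theorem ofCoeffs_addCoeffs [Semiring R] (s t : List R) :
    ofCoeffs (addCoeffs s t) = ofCoeffs s + ofCoeffs t := by
  induction s, t using addCoeffs.induct with
  | case1 t => simp [addCoeffs]
  | case2 a s => simp [addCoeffs]
  | case3 a s b t ih =>
    simp only [addCoeffs, ofCoeffs_cons, ih, C_add, mul_add]
    abel

theorem ofCoeffs_map_mul_left [Semiring R] (a : R) (s : List R) :
    ofCoeffs (s.map (a * ·)) = C a * ofCoeffs s := by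
  induction s with
  | nil => simp
  | cons b s ih => simp [ih, mul_add, ← mul_assoc, X_mul_C]

theorem ofCoeffs_mulCoeffs [Semiring R] (s t : List R) :
    ofCoeffs (mulCoeffs s t) = ofCoeffs s * ofCoeffs t := by
  induction s with
  | nil => simp [mulCoeffs]
  | cons a s ih =>
    simp [mulCoeffs, ofCoeffs_addCoeffs, ofCoeffs_map_mul_left, ih, add_mul, mul_assoc]

theorem ofCoeffs_replicate_zero_append [Semiring R] (n : ℕ) (s : List R) :
    ofCoeffs (List.replicate n 0 ++ s) = X ^ n * ofCoeffs s := by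
  induction n with
  | zero => simp
  | succ n ih => simp [List.replicate_succ, ih, pow_succ', mul_assoc]

/-- The error `c X ^ n - g f` made by `g / (c X ^ n)` as an approximation to `1 / f`. -/
def inverseResidual [Ring R] (c : R) (n : ℕ) (f g : List R) : List R :=
  addCoeffs (List.replicate n 0 ++ [c]) (mulCoeffs [-1] (mulCoeffs g f))

theorem X_pow_mul_C_eq_mul_add_inverseResidual [Ring R] (c : R) (n : ℕ) (f g : List R) :
    X ^ n * C c = ofCoeffs g * ofCoeffs f + ofCoeffs (inverseResidual c n f g) := by
  simp [inverseResidual, ofCoeffs_addCoeffs, ofCoeffs_mulCoeffs, ofCoeffs_replicate_zero_append]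

theorem coeff_ofCoeffs [Semiring R] (s : List R) (i : ℕ) :
    (ofCoeffs s).coeff i = s.getD i 0 := by
  induction s generalizing i with
  | nil => simp
  | cons a s ih => cases i <;> simp [ih, coeff_C]

theorem coeff_ofCoeffs_cons_mul_succ [Semiring R] (a : R) (s : List R) (p : R[X]) (k : ℕ) :
    (ofCoeffs (a :: s) * p).coeff (k + 1) =
      a * p.coeff (k + 1) + (ofCoeffs s * p).coeff k := by
  simp [add_mul, mul_assoc]

end CoeffLists

theorem isLittlewood_ofCoeffs {s : List ℤ} (hne : s ≠ []) (h : ∀ a ∈ s, a = -1 ∨ a = 1) :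
    IsLittlewood (ofCoeffs s) := by
  have hpos : 0 < s.length := List.length_pos_iff.mpr hne
  intro i hi
  have hdeg : (ofCoeffs s).natDegree ≤ s.length - 1 := by
    refine natDegree_le_iff_coeff_eq_zero.mpr fun j hj => ?_
    rw [coeff_ofCoeffs, List.getD_eq_default _ _ (by omega)]
  rw [coeff_ofCoeffs, List.getD_eq_getElem _ _ (by omega : i < s.length)]
  exact h _ (List.getElem_mem _)

theorem isNewman_ofCoeffs {s : List ℤ} (h : ∀ a ∈ s, a = 0 ∨ a = 1) :
    IsNewman (ofCoeffs (1 :: s)) := by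
  refine ⟨fun i => ?_, by simp⟩
  rw [coeff_ofCoeffs]
  rcases lt_or_ge i (1 :: s).length with hi | hi
  · rw [List.getD_eq_getElem _ _ hi]
    rcases List.mem_cons.mp (List.getElem_mem hi) with h1 | hs
    · exact Or.inr h1
    · exact h _ hs
  · exact Or.inl (List.getD_eq_default _ _ hi)

theorem exists_isLittlewood_dvd {s t : List ℤ} (hne : mulCoeffs s t ≠ [])
    (h : ∀ a ∈ mulCoeffs s t, a = -1 ∨ a = 1) : ∃ L, IsLittlewood L ∧ ofCoeffs s ∣ L :=
  ⟨_, isLittlewood_ofCoeffs hne h, ofCoeffs t, ofCoeffs_mulCoeffs s t⟩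

section CoefficientBounds

/-- The sum of the absolute values of the entries of a list. -/
def l1Norm {R : Type*} [Ring R] [LinearOrder R] (s : List R) : R :=
  (s.map (|·|)).sum

variable {R : Type*} [Ring R] [LinearOrder R] [IsStrictOrderedRing R]

theorem exists_forall_abs_coeff_le (p : R[X]) : ∃ j, ∀ k, |p.coeff k| ≤ |p.coeff j| := by
  obtain ⟨j, -, hj⟩ := (insert 0 p.support).exists_max_image (fun k => |p.coeff k|)
    (Finset.insert_nonempty _ _)
  refine ⟨j, fun k => ?_⟩
  by_cases hk : k ∈ p.support
  · exact hj k (Finset.mem_insert_of_mem hk)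
  · rw [notMem_support_iff.mp hk, abs_zero]
    exact (abs_nonneg _).trans (hj 0 (Finset.mem_insert_self _ _))

theorem abs_coeff_ofCoeffs_mul_le (s : List R) {p : R[X]} {B : R} (hB : ∀ k, |p.coeff k| ≤ B)
    (k : ℕ) : |(ofCoeffs s * p).coeff k| ≤ l1Norm s * B := by
  have : 0 ≤ B := (abs_nonneg _).trans (hB 0)
  induction s generalizing k with
  | nil => simp [l1Norm]
  | cons a s ih =>
    have htail : |(X * (ofCoeffs s * p)).coeff k| ≤ l1Norm s * B := by
      cases k with
      | zero => simpa using (abs_nonneg _).trans (ih 0)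
      | succ k => simpa using ih k
    calc |(ofCoeffs (a :: s) * p).coeff k|
        = |a * p.coeff k + (X * (ofCoeffs s * p)).coeff k| := by simp [add_mul, mul_assoc]
      _ ≤ |a| * |p.coeff k| + |(X * (ofCoeffs s * p)).coeff k| := by
        rw [← abs_mul]; exact abs_add_le _ _
      _ ≤ |a| * B + l1Norm s * B := by gcongr; exact hB k
      _ = l1Norm (a :: s) * B := by simp [l1Norm, add_mul]

theorem mul_abs_coeff_ofCoeffs_mul_le {R : Type*} [CommRing R] [LinearOrder R]
    [IsStrictOrderedRing R] {c : R} (hc : 0 ≤ c) (n : ℕ) (f g u : List R) {p : R[X]} {A B : R}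
    (hA : ∀ k, |(ofCoeffs f * p).coeff k| ≤ A) (hB : ∀ k, |p.coeff k| ≤ B) (k : ℕ) :
    c * |(ofCoeffs u * p).coeff k| ≤
      l1Norm (mulCoeffs u g) * A + l1Norm (mulCoeffs u (inverseResidual c n f g)) * B := by
  have hsplit : X ^ n * (C c * (ofCoeffs u * p)) =
      ofCoeffs (mulCoeffs u g) * (ofCoeffs f * p) +
        ofCoeffs (mulCoeffs u (inverseResidual c n f g)) * p := by
    rw [ofCoeffs_mulCoeffs, ofCoeffs_mulCoeffs, ← mul_assoc,
      X_pow_mul_C_eq_mul_add_inverseResidual c n f g]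
    ring
  calc c * |(ofCoeffs u * p).coeff k|
      = |(X ^ n * (C c * (ofCoeffs u * p))).coeff (k + n)| := by
        rw [coeff_X_pow_mul, coeff_C_mul, abs_mul, abs_of_nonneg hc]
    _ ≤ _ := by
        rw [hsplit, coeff_add]
        exact (abs_add_le _ _).trans
          (add_le_add (abs_coeff_ofCoeffs_mul_le _ hA _) (abs_coeff_ofCoeffs_mul_le _ hB _))

end CoefficientBounds

/-- The coefficients of `nonic`, constant term first. -/
def nonicCoeffs : List ℤ :=
  [1, -1, 0, 2, -1, 0, 1, 0, 0, 1]

/-- The product of the two noncyclotomic factors. -/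
noncomputable abbrev nonic : ℤ[X] :=
  ofCoeffs nonicCoeffs

theorem nonic_eq_mul : nonic = (X ^ 4 + X ^ 3 + 1) * (X ^ 5 - X ^ 4 + X ^ 3 - X + 1) := by
  simp only [nonic, nonicCoeffs, ofCoeffs_cons, ofCoeffs_nil, map_neg, map_one, map_zero, map_ofNat]
  ring

theorem natDegree_nonic : nonic.natDegree = 9 := by
  have hexpand : nonic = X ^ 9 + X ^ 6 - X ^ 4 + 2 * X ^ 3 - X + 1 := by
    rw [nonic_eq_mul]
    ring
  rw [hexpand]
  compute_degree!

/-- An approximate inverse of `nonic` on the unit circle: the coefficients of `X ^ (-101)`, …,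
`X ^ 50` in the Laurent expansion of `1 / nonic`, multiplied by `10000` and rounded. -/
def nonicInverse : List ℤ :=
  [1, 0, 0, 0, -1, -1, -1, -1, 0, 1, 1, 1, 2, 1, 0, -1, -2, -3, -2, -2, 0, 2, 4, 4, 4, 2, 0,
    -4, -6, -8, -6, -4, 2, 6, 12, 13, 12, 5, -2, -14, -19, -25, -17, -10, 10, 21, 38, 35, 34, 8,
    -9, -46, -57, -75, -47, -25, 42, 73, 125, 101, 90, -5, -48, -153, -153, -203, -108, -76,
    126, 202, 404, 328, 311, -66, -241, -629, -513, -551, -48, 11, 513, 376, 884, 662, 1099,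
    209, -192, -2057, -2271, -2852, -406, 986, 3950, 2868, 2551, -1318, -640, -1590, 2500, 0,
    -997, -219, 53, 1085, -655, -340, 129, 244, 216, -471, 45, 145, 89, -60, -180, 130, 50, -10,
    -67, -22, 83, -11, -24, -23, 20, 28, -24, -9, 1, 16, 1, -14, 2, 5, 5, -5, -4, 4, 2, 0, -3,
    0, 2, 0, -1, -1, 1, 1, -1, 0, 0, 1]

/-- The error of `nonicInverse`. -/
def nonicResidual : List ℤ :=
  inverseResidual 10000 101 nonicCoeffs nonicInverse

section NonicBounds

variable {p : ℤ[X]} (hp : ∀ k, |(nonic * p).coeff k| ≤ 1)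

include hp

theorem abs_coeff_le_three (k : ℕ) : |p.coeff k| ≤ 3 := by
  obtain ⟨j, hj⟩ := exists_forall_abs_coeff_le p
  have hmax := mul_abs_coeff_ofCoeffs_mul_le (c := 10000) (by norm_num) 101 nonicCoeffs
    nonicInverse [1] hp hj j
  have hinv : l1Norm (mulCoeffs [1] nonicInverse) = 38637 := by decide +kernel
  have hres : l1Norm (mulCoeffs [1] nonicResidual) = 93 := by decide +kernel
  have hone : ofCoeffs [1] * p = p := by simp
  rw [hinv, ← nonicResidual, hres, hone] at hmax
  have := hj k
  omega

theorem abs_coeff_ofCoeffs_mul_le_of_l1Norm_lt {u : List ℤ} {b : ℤ}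
    (hu : l1Norm (mulCoeffs u nonicInverse) + 3 * l1Norm (mulCoeffs u nonicResidual) <
      10000 * (b + 1)) (k : ℕ) : |(ofCoeffs u * p).coeff k| ≤ b := by
  have := mul_abs_coeff_ofCoeffs_mul_le (c := 10000) (by norm_num) 101 nonicCoeffs nonicInverse u hp
    (abs_coeff_le_three hp) k
  rw [← nonicResidual] at this
  omega

end NonicBounds

section Search

/-- Membership in a list of numbers. It is defined by bare recursors and `Nat.beq` because the
kernel evaluates these several times faster than `List.elem`. -/
noncomputable def fastElem (a : ℕ) (l : List ℕ) : Bool :=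
  l.rec false fun b _ ih => (Nat.beq a b).rec ih true

theorem fastElem_iff {a : ℕ} {l : List ℕ} : fastElem a l = true ↔ a ∈ l := by
  induction l with
  | nil => simp [fastElem]
  | cons b l ih =>
    have hcons : fastElem a (b :: l) = (Nat.beq a b || fastElem a l) := by
      cases h : Nat.beq a b <;> simp [fastElem, h]
    simp [hcons, ih]

/-- `force n f = f n`, but the kernel evaluates `n` to a numeral before substituting it into `f`,
so that `n` is computed once and not at each of its occurrences. -/
def force {α : Type*} : ℕ → (ℕ → α) → α
  | 0, f => f 0
  | n + 1, f => f (n + 1)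

@[simp] theorem force_eq {α : Type*} (n : ℕ) (f : ℕ → α) : force n f = f n := by
  cases n <;> rfl

/-- Pass to `k` the list `acc` extended by those elements of a list that it does not contain yet.
Continuation-passing style makes the kernel compute the list before it is used. -/
noncomputable def insertAll : List ℕ → List ℕ → (List ℕ → Bool) → Bool
  | [], acc, k => k acc
  | a :: l, acc, k =>
    force a fun a => bif fastElem a acc then insertAll l acc k else insertAll l (a :: acc) k

/-- Pass to `k` the list `acc` extended by the successors of a list of vertices of a digraph. -/
noncomputable def insertSuccessors (next : ℕ → List ℕ) :
    List ℕ → List ℕ → (List ℕ → Bool) → Bool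
  | [], acc, k => k acc
  | a :: l, acc, k => insertAll (next a) acc fun acc => insertSuccessors next l acc k

/-- Breadth-first search in a digraph: there is no walk from a vertex of the given list to `goal`,
because all walks of the given length have died out without meeting it. -/
noncomputable def searchDiesOut (next : ℕ → List ℕ) (goal : ℕ) : ℕ → List ℕ → Bool
  | 0, l => l.isEmpty
  | n + 1, l =>
    bif fastElem goal l then false else insertSuccessors next l [] (searchDiesOut next goal n)

theorem exists_of_insertAll {l acc : List ℕ} {k : List ℕ → Bool} (h : insertAll l acc k = true) :
    ∃ acc', acc ⊆ acc' ∧ l ⊆ acc' ∧ k acc' = true := by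
  induction l generalizing acc with
  | nil => exact ⟨acc, List.Subset.refl _, List.nil_subset _, h⟩
  | cons a l ih =>
    rw [insertAll, force_eq] at h
    cases ha : fastElem a acc <;> rw [ha] at h
    · obtain ⟨acc', hacc, hl, hk⟩ := ih h
      obtain ⟨ha', hacc'⟩ := List.cons_subset.mp hacc
      exact ⟨acc', hacc', List.cons_subset.mpr ⟨ha', hl⟩, hk⟩
    · obtain ⟨acc', hacc, hl, hk⟩ := ih h
      exact ⟨acc', hacc, List.cons_subset.mpr ⟨hacc (fastElem_iff.mp ha), hl⟩, hk⟩

theorem exists_of_insertSuccessors {next : ℕ → List ℕ} {l acc : List ℕ} {k : List ℕ → Bool}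
    (h : insertSuccessors next l acc k = true) :
    ∃ acc', acc ⊆ acc' ∧ (∀ a ∈ l, next a ⊆ acc') ∧ k acc' = true := by
  induction l generalizing acc with
  | nil => exact ⟨acc, List.Subset.refl _, by simp, h⟩
  | cons a l ih =>
    obtain ⟨acc₁, hacc₁, hnext, h₁⟩ := exists_of_insertAll h
    obtain ⟨acc₂, hacc₂, hl, hk⟩ := ih h₁
    exact ⟨acc₂, List.Subset.trans hacc₁ hacc₂,
      List.forall_mem_cons.mpr ⟨List.Subset.trans hnext hacc₂, hl⟩, hk⟩

theorem not_reflTransGen_of_searchDiesOut {next : ℕ → List ℕ} {goal n : ℕ} {l : List ℕ}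
    (h : searchDiesOut next goal n l = true) {a : ℕ} (ha : a ∈ l) :
    ¬ Relation.ReflTransGen (fun a b => b ∈ next a) a goal := by
  induction n generalizing l a with
  | zero => simp [List.isEmpty_iff.mp h] at ha
  | succ n ih =>
    rw [searchDiesOut] at h
    cases hgoal : fastElem goal l <;> rw [hgoal] at h
    · obtain ⟨acc, -, hnext, hacc⟩ := exists_of_insertSuccessors h
      intro hwalk
      rcases hwalk.cases_head with rfl | ⟨b, hab, hwalk⟩
      · simp [fastElem_iff.mpr ha] at hgoal
      · exact ih hacc (hnext a ha hab) hwalk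
    · cases h

end Search

section Windows

/-- The window `d k, …, d (k + 8)` of a sequence of octal digits, as a nine-digit octal number
whose last digit is `d (k + 8)`. -/
def window (d : ℕ → ℕ) (k : ℕ) : ℕ :=
  ∑ i ∈ Finset.range 9, d (k + i) * 8 ^ (8 - i)

/-- The octal digit of `w` at the place of weight `8 ^ i`. -/
def octalDigit (w i : ℕ) : ℕ :=
  w / 8 ^ i % 8

theorem octalDigit_window {d : ℕ → ℕ} (hd : ∀ i, d i < 8) (k : ℕ) {i j : ℕ} (hij : i + j = 8) :
    octalDigit (window d k) j = d (k + i) := by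
  have h (i : ℕ) := hd (k + i)
  have := h 0; have := h 1; have := h 2; have := h 3; have := h 4
  have := h 5; have := h 6; have := h 7; have := h 8
  obtain rfl : i = 8 - j := by omega
  have hj : j ≤ 8 := by omega
  clear h hij
  interval_cases j <;>
    simp only [octalDigit, window, Finset.sum_range_succ, Finset.sum_range_zero, Nat.reduceSub] <;>
    omega

theorem window_succ {d : ℕ → ℕ} (hd : ∀ i, d i < 8) (k : ℕ) :
    window d (k + 1) = d (k + 9) + 8 * (window d k % 8 ^ 8) := by
  have h (i : ℕ) := hd (k + i)
  have := h 0; have := h 1; have := h 2; have := h 3; have := h 4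
  have := h 5; have := h 6; have := h 7; have := h 8
  clear h
  simp only [window, Finset.sum_range_succ, Finset.sum_range_zero, add_assoc, Nat.reduceAdd,
    Nat.reduceSub]
  omega

/-- Whether the new digit `x` after the window `w` respects the bounds of
`abs_coeff_ofCoeffs_mul_le_of_l1Norm_lt` for four polynomials `U`, whose coefficients can be read
off here. A digit is a coefficient increased by `3`, which shifts each bound by `3 * U(1)`. -/
def isWithinBounds (x w : ℕ) : Bool :=
  Nat.ble x 6 &&
  Nat.ble (octalDigit w 0 + 5) (2 * x + octalDigit w 2 + octalDigit w 5) &&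
  Nat.ble (2 * x + octalDigit w 2 + octalDigit w 5) (octalDigit w 0 + 13) &&
  Nat.ble (2 * octalDigit w 0 + 11)
    (2 * x + octalDigit w 1 + 2 * octalDigit w 2 + 2 * octalDigit w 3 + octalDigit w 4 +
      2 * octalDigit w 5) &&
  Nat.ble
    (2 * x + octalDigit w 1 + 2 * octalDigit w 2 + 2 * octalDigit w 3 + octalDigit w 4 +
      2 * octalDigit w 5)
    (2 * octalDigit w 0 + 37) &&
  Nat.ble (octalDigit w 0 + 1) (2 * x + octalDigit w 5) &&
  Nat.ble (2 * x + octalDigit w 5) (octalDigit w 0 + 11) &&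
  Nat.ble 7 (x + 2 * octalDigit w 0 + 2 * octalDigit w 1 + octalDigit w 2 + octalDigit w 3) &&
  Nat.ble (x + 2 * octalDigit w 0 + 2 * octalDigit w 1 + octalDigit w 2 + octalDigit w 3) 35

/-- The next window, if there is one, when the coefficient of `nonic * p` at the new place is
`e - 9`: the shift of digits by `3` adds `3 * nonic(1) = 9` to the recurrence. -/
def successors (e w : ℕ) : List ℕ :=
  force (octalDigit w 0 + octalDigit w 3 + e -
      (2 * octalDigit w 2 + octalDigit w 5 + octalDigit w 8)) fun x =>
    bif Nat.ble (2 * octalDigit w 2 + octalDigit w 5 + octalDigit w 8)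
          (octalDigit w 0 + octalDigit w 3 + e) && isWithinBounds x w then
      [x + 8 * (w % 8 ^ 8)]
    else []

/-- The possible next windows when `nonic * p` is a Littlewood polynomial. -/
def littlewoodSuccessors (w : ℕ) : List ℕ :=
  successors 8 w ++ successors 10 w

theorem window_succ_mem_successors {d : ℕ → ℕ} (hd : ∀ i, d i < 8) {k e : ℕ}
    (hrec : d (k + 9) + (2 * d (k + 6) + d (k + 3) + d k) = d (k + 8) + d (k + 5) + e)
    (hbounds : isWithinBounds (d (k + 9)) (window d k) = true) :
    window d (k + 1) ∈ successors e (window d k) := by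
  have hle : 2 * d (k + 6) + d (k + 3) + d k ≤ d (k + 8) + d (k + 5) + e := by omega
  have hnew : d (k + 8) + d (k + 5) + e - (2 * d (k + 6) + d (k + 3) + d k) = d (k + 9) := by
    omega
  rw [successors, octalDigit_window hd k (rfl : 8 + 0 = 8),
    octalDigit_window hd k (rfl : 6 + 2 = 8), octalDigit_window hd k (rfl : 5 + 3 = 8),
    octalDigit_window hd k (rfl : 3 + 5 = 8), octalDigit_window hd k (rfl : 0 + 8 = 8)]
  simp [hnew, Nat.ble_eq_true_of_le hle, hbounds, window_succ hd]

end Windows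

section Walk

/-- The coefficients of `p` as octal digits, for `p` with coefficients in `[-3, 3]`; smaller
coefficients are truncated to the digit `0`. -/
def coeffDigit (p : ℤ[X]) (k : ℕ) : ℕ :=
  (p.coeff k + 3).toNat

variable {p : ℤ[X]} (hp : ∀ k, |(nonic * p).coeff k| ≤ 1)

include hp

theorem natCast_coeffDigit (k : ℕ) : (coeffDigit p k : ℤ) = p.coeff k + 3 := by
  have := abs_le.mp (abs_coeff_le_three hp k)
  exact Int.toNat_of_nonneg (by omega)

theorem coeffDigit_le (k : ℕ) : coeffDigit p k ≤ 6 := by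
  have := abs_le.mp (abs_coeff_le_three hp k)
  have := natCast_coeffDigit hp k
  omega

theorem isWithinBounds_window (k : ℕ) :
    isWithinBounds (coeffDigit p (k + 9)) (window (coeffDigit p) k) = true := by
  have hd (i : ℕ) : coeffDigit p i < 8 := (coeffDigit_le hp i).trans_lt (by norm_num)
  have h₁ := abs_coeff_ofCoeffs_mul_le_of_l1Norm_lt hp (u := [2, -1, 0, 1, 0, 0, 1]) (b := 4)
    (by decide +kernel) (k + 9)
  have h₂ := abs_coeff_ofCoeffs_mul_le_of_l1Norm_lt hp (u := [2, -2, 1, 2, 2, 1, 2]) (b := 13)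
    (by decide +kernel) (k + 9)
  have h₃ := abs_coeff_ofCoeffs_mul_le_of_l1Norm_lt hp (u := [2, -1, 0, 0, 0, 0, 1]) (b := 5)
    (by decide +kernel) (k + 9)
  have h₄ := abs_coeff_ofCoeffs_mul_le_of_l1Norm_lt hp (u := [1, 2, 2, 1, 1]) (b := 14)
    (by decide +kernel) (k + 9)
  simp only [coeff_ofCoeffs_cons_mul_succ, ofCoeffs_nil, zero_mul, coeff_zero, abs_le,
    add_assoc, Nat.reduceAdd] at h₁ h₂ h₃ h₄
  have hx := natCast_coeffDigit hp
  have := hx (k + 9); have := hx (k + 8); have := hx (k + 7); have := hx (k + 6)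
  have := hx (k + 5); have := hx (k + 4); have := hx (k + 3)
  have := coeffDigit_le hp (k + 9)
  rw [isWithinBounds, octalDigit_window hd k (rfl : 8 + 0 = 8),
    octalDigit_window hd k (rfl : 7 + 1 = 8), octalDigit_window hd k (rfl : 6 + 2 = 8),
    octalDigit_window hd k (rfl : 5 + 3 = 8), octalDigit_window hd k (rfl : 4 + 4 = 8),
    octalDigit_window hd k (rfl : 3 + 5 = 8)]
  simp only [Bool.and_eq_true, Nat.ble_eq]
  omega

theorem window_succ_mem_littlewoodSuccessors {k : ℕ}
    (hk : (nonic * p).coeff (k + 9) = -1 ∨ (nonic * p).coeff (k + 9) = 1) :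
    window (coeffDigit p) (k + 1) ∈ littlewoodSuccessors (window (coeffDigit p) k) := by
  have hd (i : ℕ) : coeffDigit p i < 8 := (coeffDigit_le hp i).trans_lt (by norm_num)
  have hbounds := isWithinBounds_window hp k
  have hlast : (ofCoeffs [1] * p).coeff k = p.coeff k := by simp
  simp only [nonic, nonicCoeffs, coeff_ofCoeffs_cons_mul_succ, hlast, add_assoc,
    Nat.reduceAdd] at hk
  have hx := natCast_coeffDigit hp
  have := hx (k + 9); have := hx (k + 8); have := hx (k + 6); have := hx (k + 5)
  have := hx (k + 3); have := hx k
  refine List.mem_append.mpr (hk.imp (fun hk => ?_) fun hk => ?_) <;>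
    exact window_succ_mem_successors hd (by omega) hbounds

theorem reflTransGen_window {n : ℕ}
    (hn : ∀ k < n, (nonic * p).coeff (k + 9) = -1 ∨ (nonic * p).coeff (k + 9) = 1) :
    Relation.ReflTransGen (fun a b => b ∈ littlewoodSuccessors a)
      (window (coeffDigit p) 0) (window (coeffDigit p) n) := by
  induction n with
  | zero => exact .refl
  | succ n ih =>
    exact (ih fun k hk => hn k (by omega)).tail
      (window_succ_mem_littlewoodSuccessors hp (hn n n.lt_succ_self))

end Walk

/-- The window of nine zero coefficients, that is, of nine digits `3`. -/
def zeroWindow : ℕ :=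
  0o333333333

theorem window_eq_zeroWindow {d : ℕ → ℕ} {k : ℕ} (h : ∀ i, d (k + i) = 3) :
    window d k = zeroWindow := by
  simp [window, h, Finset.sum_range_succ, zeroWindow]

theorem searchDiesOut_littlewoodSuccessors :
    searchDiesOut littlewoodSuccessors zeroWindow 200 [zeroWindow + 1] = true := by
  decide +kernel

theorem not_isLittlewood_nonic_mul {M : ℤ[X]} (hM : M.coeff 0 = 1) :
    ¬ IsLittlewood (nonic * M) := by
  intro hL
  have hcoeff (k : ℕ) : (nonic * (X ^ 8 * M)).coeff (k + 8) = (nonic * M).coeff k := by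
    rw [mul_left_comm, coeff_X_pow_mul]
  have hp (k : ℕ) : |(nonic * (X ^ 8 * M)).coeff k| ≤ 1 := by
    rw [mul_left_comm, coeff_X_pow_mul']
    split_ifs
    · exact hL.abs_coeff_le _
    · simp
  have hM0 : M ≠ 0 := by
    rintro rfl
    simp at hM
  have hdeg : (nonic * M).natDegree = 9 + M.natDegree := by
    have hnonic : nonic ≠ 0 := ne_zero_of_natDegree_gt (n := 8) (by simp [natDegree_nonic])
    rw [natDegree_mul hnonic hM0, natDegree_nonic]
  have hwalk := reflTransGen_window hp (n := (nonic * M).natDegree)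
    fun k hk => (hcoeff (k + 1)).symm ▸ hL (k + 1) hk
  have hstart : window (coeffDigit (X ^ 8 * M)) 0 = zeroWindow + 1 := by
    simp [window, coeffDigit, Finset.sum_range_succ, coeff_X_pow_mul', hM, zeroWindow]
  have hend : window (coeffDigit (X ^ 8 * M)) (nonic * M).natDegree = zeroWindow := by
    refine window_eq_zeroWindow fun i => ?_
    rw [coeffDigit, coeff_X_pow_mul', hdeg, coeff_eq_zero_of_natDegree_lt (by omega)]
    simp
  rw [hstart, hend] at hwalk
  exact not_reflTransGen_of_searchDiesOut searchDiesOut_littlewoodSuccessors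
    (List.mem_singleton_self _) hwalk

theorem not_nonic_dvd_of_isLittlewood {L : ℤ[X]} (hL : IsLittlewood L) : ¬ nonic ∣ L := by
  rintro ⟨M, rfl⟩
  have h0 : (nonic * M).coeff 0 = M.coeff 0 := by simp [nonic, nonicCoeffs]
  obtain h | h : M.coeff 0 = -1 ∨ M.coeff 0 = 1 := h0 ▸ hL 0 (Nat.zero_le _)
  · refine not_isLittlewood_nonic_mul (M := -M) (by simp [h]) ?_
    simpa using hL.neg
  · exact not_isLittlewood_nonic_mul h hL

end NewmanProduct

/-- The Newman polynomial
`P = X^11 + X^10 + X^9 + X^8 + X^7 + X^5 + X^4 + X^3 + 1` factors as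
`(X^2 + X + 1)(X^4 + X^3 + 1)(X^5 - X^4 + X^3 - X + 1)` and divides no Littlewood
polynomial, although both noncyclotomic factors have Littlewood multiples. -/
theorem newman_product_no_littlewood :
    IsNewman (X ^ 11 + X ^ 10 + X ^ 9 + X ^ 8 + X ^ 7 + X ^ 5 + X ^ 4 + X ^ 3 + 1 :
      Polynomial ℤ) ∧
    (X ^ 11 + X ^ 10 + X ^ 9 + X ^ 8 + X ^ 7 + X ^ 5 + X ^ 4 + X ^ 3 + 1 : Polynomial ℤ) =
      (X ^ 2 + X + 1) * (X ^ 4 + X ^ 3 + 1) * (X ^ 5 - X ^ 4 + X ^ 3 - X + 1) ∧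
    (¬ ∃ L : Polynomial ℤ, IsLittlewood L ∧
      (X ^ 11 + X ^ 10 + X ^ 9 + X ^ 8 + X ^ 7 + X ^ 5 + X ^ 4 + X ^ 3 + 1 : Polynomial ℤ) ∣ L) ∧
    (∃ L : Polynomial ℤ, IsLittlewood L ∧ (X ^ 4 + X ^ 3 + 1 : Polynomial ℤ) ∣ L) ∧
    (∃ L : Polynomial ℤ, IsLittlewood L ∧ (X ^ 5 - X ^ 4 + X ^ 3 - X + 1 : Polynomial ℤ) ∣ L) := by
  refine ⟨?_, by ring, ?_, ?_, ?_⟩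
  · have h := NewmanProduct.isNewman_ofCoeffs (s := [0, 0, 1, 1, 1, 0, 1, 1, 1, 1, 1]) (by decide)
    convert h using 1
    simp only [NewmanProduct.ofCoeffs_cons, NewmanProduct.ofCoeffs_nil, map_one, map_zero]
    ring
  · rintro ⟨L, hL, hdvd⟩
    refine NewmanProduct.not_nonic_dvd_of_isLittlewood hL (dvd_trans ⟨X ^ 2 + X + 1, ?_⟩ hdvd)
    rw [NewmanProduct.nonic_eq_mul]
    ring
  · convert NewmanProduct.exists_isLittlewood_dvd (s := [1, 0, 0, 1, 1])
      (t := [-1, 1, -1, 2, -1, 1, 0, 0, 1, 0, 1]) (by decide +kernel) (by decide +kernel) using 4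
    simp only [NewmanProduct.ofCoeffs_cons, NewmanProduct.ofCoeffs_nil, map_one, map_zero]
    ring
  · convert NewmanProduct.exists_isLittlewood_dvd (s := [1, -1, 0, 1, -1, 1])
      (t := [1, 0, 1, 1, 1, 0, 1, 1, 0, -1, 0, 1, 0, -2, -1, 1, 1, -1, 0, 2, 2, 1, 1, 2, 2, 1])
      (by decide +kernel) (by decide +kernel) using 4
    simp only [NewmanProduct.ofCoeffs_cons, NewmanProduct.ofCoeffs_nil, map_neg, map_one, map_zero]
    ring
end

section
/- The polynomial p(X) = X^3 - X + 1 divides the Newman polynomial X^5 + X^4 + 1, and its reciprocal p*(X) = X^3 - X^2 + 1 divides the Newman polynomial X^5 + X + 1; however, the product p(X)·p*(X) = X^6 - X^5 - X^4 + 3X^3 - X^2 - X + 1 divides no Newman polynomial. -/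
open Polynomial

/-!
Let `P = (X ^ 3 - X + 1) * (X ^ 3 - X ^ 2 + 1)` and suppose that `N = P * Q` is Newman. Since `P`
has no root on the unit circle, it has an inverse with absolutely summable coefficients among
two-sided Laurent series. A truncation `G` of a multiple of it satisfies
`G * P = 22 * X ^ 14 + E` with a small error `E`, and comparing coefficients of
`G * N = 22 * X ^ 14 * Q + E * Q` at a largest coefficient of `Q` gives a bound on all of them.
As `P` has constant term `1`, each coefficient of `Q` is determined by the earlier ones and by the
corresponding coefficient of `N`, which is `0` or `1`. The resulting binary tree of possible
quotients, pruned by the bound, is finite, whereas `Q`, padded by zeros, is an infinite branch.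
-/

section ofCoeffs

variable {R : Type*}

section Semiring

variable [Semiring R] (a : R) (l : List R) (Q : R[X])

theorem coeff_zero_ofCoeffs_cons_mul : (ofCoeffs (a :: l) * Q).coeff 0 = a * Q.coeff 0 := by
  simp [ofCoeffs, mul_coeff_zero]

theorem coeff_succ_ofCoeffs_cons_mul (n : ℕ) :
    (ofCoeffs (a :: l) * Q).coeff (n + 1) = a * Q.coeff (n + 1) + (ofCoeffs l * Q).coeff n := by
  rw [ofCoeffs, add_mul, mul_assoc, coeff_add, coeff_C_mul, coeff_X_mul]

end Semiring

section Order

variable [Ring R] [LinearOrder R] [IsStrictOrderedRing R]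

theorem mul_mem_Icc_neg_negPart_posPart (a : R) {x : R} (hx : x ∈ Set.Icc 0 1) :
    a * x ∈ Set.Icc (-a⁻) a⁺ := by
  obtain ⟨h0, h1⟩ := hx
  constructor
  · calc -a⁻ ≤ -(a⁻ * x) := neg_le_neg (mul_le_of_le_one_right (negPart_nonneg a) h1)
      _ = -a⁻ * x := (neg_mul _ _).symm
      _ ≤ a * x := mul_le_mul_of_nonneg_right (neg_le.1 (neg_le_negPart a)) h0
  · calc a * x ≤ a⁺ * x := mul_le_mul_of_nonneg_right (le_posPart a) h0
      _ ≤ a⁺ := mul_le_of_le_one_right (posPart_nonneg a) h1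

theorem coeff_ofCoeffs_mul_mem_Icc {N : R[X]} (hN : ∀ i, N.coeff i ∈ Set.Icc 0 1) (l : List R)
    (n : ℕ) :
    (ofCoeffs l * N).coeff n ∈ Set.Icc (-(l.map (·⁻)).sum) (l.map (·⁺)).sum := by
  induction l generalizing n with
  | nil => simp [ofCoeffs]
  | cons a l ih =>
    rw [List.map_cons, List.map_cons, List.sum_cons, List.sum_cons, neg_add]
    cases n with
    | zero =>
      have hneg : 0 ≤ (l.map (·⁻)).sum :=
        List.sum_nonneg (List.forall_mem_map.2 fun b _ => negPart_nonneg b)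
      have hpos : 0 ≤ (l.map (·⁺)).sum :=
        List.sum_nonneg (List.forall_mem_map.2 fun b _ => posPart_nonneg b)
      obtain ⟨hlow, hup⟩ := mul_mem_Icc_neg_negPart_posPart a (hN 0)
      rw [coeff_zero_ofCoeffs_cons_mul]
      exact ⟨add_le_of_le_of_nonpos hlow (neg_nonpos.2 hneg), le_add_of_le_of_nonneg hup hpos⟩
    | succ n =>
      obtain ⟨hlow, hup⟩ := mul_mem_Icc_neg_negPart_posPart a (hN (n + 1))
      rw [coeff_succ_ofCoeffs_cons_mul]
      exact ⟨add_le_add hlow (ih n).1, add_le_add hup (ih n).2⟩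

end Order

theorem norm_coeff_ofCoeffs_mul_le [SeminormedRing R] (l : List R) (Q : R[X]) (n : ℕ) :
    ‖(ofCoeffs l * Q).coeff n‖ ≤ (l.map norm).sum * Q.supNorm := by
  induction l generalizing n with
  | nil => simp [ofCoeffs]
  | cons a l ih =>
    have norm_mul_coeff_le (i : ℕ) : ‖a * Q.coeff i‖ ≤ ‖a‖ * Q.supNorm :=
      (norm_mul_le _ _).trans (by gcongr; exact Q.le_supNorm i)
    rw [List.map_cons, List.sum_cons, add_mul]
    cases n with
    | zero =>
      rw [coeff_zero_ofCoeffs_cons_mul]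
      exact le_add_of_le_of_nonneg (norm_mul_coeff_le 0) ((norm_nonneg _).trans (ih 0))
    | succ n =>
      rw [coeff_succ_ofCoeffs_cons_mul]
      exact norm_add_le_of_le (norm_mul_coeff_le _) (ih n)

theorem sub_mul_supNorm_le [SeminormedRing R] [NormMulClass R] (c : R) (m : ℕ) (l : List R)
    (Q : R[X]) :
    (‖c‖ - (l.map norm).sum) * Q.supNorm ≤ ((C c * X ^ m + ofCoeffs l) * Q).supNorm := by
  obtain ⟨k, hk⟩ := Q.exists_eq_supNorm
  have hcoeff : ((C c * X ^ m + ofCoeffs l) * Q).coeff (k + m) =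
      c * Q.coeff k + (ofCoeffs l * Q).coeff (k + m) := by
    rw [add_mul, coeff_add, mul_assoc, coeff_C_mul, coeff_X_pow_mul]
  calc (‖c‖ - (l.map norm).sum) * Q.supNorm
      = ‖c * Q.coeff k‖ - (l.map norm).sum * Q.supNorm := by rw [norm_mul, ← hk, sub_mul]
    _ ≤ ‖c * Q.coeff k‖ - ‖(ofCoeffs l * Q).coeff (k + m)‖ := by
      gcongr; exact norm_coeff_ofCoeffs_mul_le l Q _
    _ ≤ ‖((C c * X ^ m + ofCoeffs l) * Q).coeff (k + m)‖ := by
      rw [hcoeff]; exact norm_sub_le_norm_add _ _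
    _ ≤ _ := le_supNorm _ _

end ofCoeffs

section Search

/-- The list `[q (n - 1), …, q 0]`. -/
def history {R : Type*} (q : ℕ → R) : ℕ → List R
  | 0 => []
  | n + 1 => q n :: history q n

/-- The dot product of two lists, the longer one being truncated. -/
def dot {R : Type*} [Semiring R] (l w : List R) : R :=
  (List.zipWith (· * ·) l w).sum

theorem coeff_ofCoeffs_mul {R : Type*} [Semiring R] (l : List R) (Q : R[X]) (n : ℕ) :
    (ofCoeffs l * Q).coeff n = dot l (history Q.coeff (n + 1)) := by
  induction l generalizing n with
  | nil => simp [ofCoeffs, dot]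
  | cons a l ih =>
    cases n with
    | zero => rw [coeff_zero_ofCoeffs_cons_mul]; simp [history, dot]
    | succ n => rw [coeff_succ_ofCoeffs_cons_mul, ih]; simp [history, dot]

theorem coeff_ofCoeffs_one_cons_mul {R : Type*} [Semiring R] (p : List R) (Q : R[X]) (n : ℕ) :
    (ofCoeffs (1 :: p) * Q).coeff n = Q.coeff n + dot p (history Q.coeff n) := by
  simp [coeff_ofCoeffs_mul, history, dot]

/-- Depth-first search for the quotients of power series with coefficients in `D` by the polynomial
`1 + p₀ X + p₁ X² + ⋯`: the value is `true` if the initial coefficients `w` of a quotient (the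
latest one first) cannot be continued by `d` further ones of absolute value at most `M`. -/
def isDeadEnd (D p : List ℤ) (M : ℤ) : ℕ → List ℤ → Bool
  | 0, _ => false
  | d + 1, w => D.all fun a =>
      decide (M < |a - dot p w|) || isDeadEnd D p M d ((a - dot p w) :: w)

theorem isDeadEnd_history_eq_false {D p : List ℤ} {M : ℤ} {q : ℕ → ℤ} (hq : ∀ k, |q k| ≤ M)
    (hD : ∀ k, q k + dot p (history q k) ∈ D) (d k : ℕ) :
    isDeadEnd D p M d (history q k) = false := by
  induction d generalizing k with
  | zero => rfl
  | succ d ih =>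
    rw [isDeadEnd, List.all_eq_false]
    refine ⟨_, hD k, ?_⟩
    rw [add_sub_cancel_right, ← history, ih (k + 1)]
    simpa using hq k

end Search

section Product

/-- The coefficients of `G` in the header: those of the two-sided inverse of the product,
truncated, scaled by about `19` and adjusted to make the error small. -/
def approxInverse : List ℤ :=
  [1, 3, 4, 4, 0, -4, -10, -9, -7, 6, 12, 24, 12, 6, -7, -9, -10, -4, 0, 4, 4, 3, 1]

/-- The coefficients of the error term `E` in the header. -/
def inverseError : List ℤ :=
  [1, 2, 0, 0, 0, 0, 0, 0, 0, 0, 0, 0, 0, -2, 0, -2, 0, 0, 0, 0, 0, 0, 0, 0, 0, 0, 0, 2, 1]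

theorem approxInverse_mul_product :
    ofCoeffs approxInverse * ((X ^ 3 - X + 1) * (X ^ 3 - X ^ 2 + 1)) =
      C 22 * X ^ 14 + ofCoeffs inverseError := by
  simp only [approxInverse, inverseError, ofCoeffs, map_zero, map_one, map_neg, map_ofNat]
  ring

theorem IsNewman.coeff_mem_Icc {N : ℤ[X]} (hN : IsNewman N) (i : ℕ) :
    N.coeff i ∈ Set.Icc 0 1 := by
  rcases hN.1 i with h | h <;> rw [h] <;> simp

theorem IsNewman.supNorm_approxInverse_mul_le {N : ℤ[X]} (hN : IsNewman N) :
    (ofCoeffs approxInverse * N).supNorm ≤ 84 := by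
  obtain ⟨i, hi⟩ := (ofCoeffs approxInverse * N).exists_eq_supNorm
  have hpos : (approxInverse.map (·⁺)).sum = 84 := by decide
  have hneg : (approxInverse.map (·⁻)).sum = 60 := by decide
  obtain ⟨hlow, hup⟩ := coeff_ofCoeffs_mul_mem_Icc hN.coeff_mem_Icc approxInverse i
  rw [hi, Int.norm_eq_abs]
  exact_mod_cast abs_le.2 ⟨by omega, by omega⟩

theorem IsNewman.abs_coeff_le_seven {Q : ℤ[X]}
    (hN : IsNewman ((X ^ 3 - X + 1) * (X ^ 3 - X ^ 2 + 1) * Q)) (k : ℕ) : |Q.coeff k| ≤ 7 := by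
  have hnorm : (inverseError.map norm).sum = 10 := by
    norm_num [inverseError, Int.norm_eq_abs]
  have hbound : (22 - 10) * Q.supNorm ≤ 84 :=
    calc (22 - 10) * Q.supNorm
        = (‖(22 : ℤ)‖ - (inverseError.map norm).sum) * Q.supNorm := by
          rw [hnorm, Int.norm_eq_abs]; norm_num
      _ ≤ ((C 22 * X ^ 14 + ofCoeffs inverseError) * Q).supNorm :=
          sub_mul_supNorm_le 22 14 inverseError Q
      _ = (ofCoeffs approxInverse * ((X ^ 3 - X + 1) * (X ^ 3 - X ^ 2 + 1) * Q)).supNorm := by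
          rw [← approxInverse_mul_product, mul_assoc]
      _ ≤ 84 := hN.supNorm_approxInverse_mul_le
  have hcoeff : ‖Q.coeff k‖ ≤ 7 := by linarith [Q.le_supNorm k]
  rw [Int.norm_eq_abs] at hcoeff
  exact_mod_cast hcoeff

theorem product_eq_ofCoeffs :
    ((X ^ 3 - X + 1) * (X ^ 3 - X ^ 2 + 1) : ℤ[X]) = ofCoeffs [1, -1, -1, 3, -1, -1, 1] := by
  simp only [ofCoeffs, map_one, map_neg, map_ofNat]
  ring

theorem isDeadEnd_product : isDeadEnd [0, 1] [-1, -1, 3, -1, -1, 1] 7 25 [1] = true := by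
  decide +kernel

theorem not_isNewman_product_mul (Q : ℤ[X]) :
    ¬ IsNewman ((X ^ 3 - X + 1) * (X ^ 3 - X ^ 2 + 1) * Q) := by
  intro hN
  have hq := hN.abs_coeff_le_seven
  rw [product_eq_ofCoeffs] at hN
  have hdigit (k : ℕ) :
      Q.coeff k + dot [-1, -1, 3, -1, -1, 1] (history Q.coeff k) ∈ [0, 1] := by
    rw [← coeff_ofCoeffs_one_cons_mul]
    simpa using hN.1 k
  have hstart : history Q.coeff 1 = [1] := by
    have h0 := hN.2
    rw [coeff_zero_ofCoeffs_cons_mul, one_mul] at h0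
    rw [history, history, h0]
  have hsearch := isDeadEnd_history_eq_false hq hdigit 25 1
  rw [hstart, isDeadEnd_product] at hsearch
  contradiction

end Product

theorem isNewman_trinomial {m n : ℕ} (hm : 0 < m) (hmn : m < n) :
    IsNewman (X ^ n + X ^ m + 1) := by
  constructor
  · intro i
    simp only [coeff_add, coeff_X_pow, coeff_one, Set.mem_insert_iff, Set.mem_singleton_iff]
    split_ifs <;> omega
  · simp [coeff_X_pow, hm.ne, (hm.trans hmn).ne]

/-- `p = X^3 - X + 1` divides the Newman polynomial `X^5 + X^4 + 1`, its
reciprocal `p* = X^3 - X^2 + 1` divides the Newman polynomial `X^5 + X + 1`, but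
the product `p · p* = X^6 - X^5 - X^4 + 3X^3 - X^2 - X + 1` divides no Newman
polynomial. -/
theorem product_with_reciprocal_no_newman :
    ((X ^ 3 - X + 1 : Polynomial ℤ) ∣ (X ^ 5 + X ^ 4 + 1) ∧
      IsNewman (X ^ 5 + X ^ 4 + 1 : Polynomial ℤ)) ∧
    ((X ^ 3 - X ^ 2 + 1 : Polynomial ℤ) ∣ (X ^ 5 + X + 1) ∧
      IsNewman (X ^ 5 + X + 1 : Polynomial ℤ)) ∧
    ((X ^ 3 - X + 1) * (X ^ 3 - X ^ 2 + 1) : Polynomial ℤ) =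
      X ^ 6 - X ^ 5 - X ^ 4 + 3 * X ^ 3 - X ^ 2 - X + 1 ∧
    ¬ ∃ N : Polynomial ℤ, IsNewman N ∧
      ((X ^ 3 - X + 1) * (X ^ 3 - X ^ 2 + 1) : Polynomial ℤ) ∣ N := by
  refine ⟨⟨⟨X ^ 2 + X + 1, by ring⟩, isNewman_trinomial (by norm_num) (by norm_num)⟩,
    ⟨⟨X ^ 2 + X + 1, by ring⟩, ?_⟩, by ring, ?_⟩
  · simpa only [pow_one] using isNewman_trinomial one_pos (show 1 < 5 by norm_num)
  · rintro ⟨_, hN, Q, rfl⟩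
    exact not_isNewman_product_mul Q hN
end

section
/- The Borwein polynomial P(X) = (X^2 + X + 1)·(X^3 - X + 1)^2 = X^8 + X^7 - X^6 + X^4 + X^3 - X + 1 divides no Newman polynomial, but P(X) divides some Littlewood polynomial. -/
open Polynomial

/-!
If `Q` divides `p`, then every initial segment `g` of `p`, read from the leading coefficient down,
is carried to a multiple of `Q` by finitely many steps `g ↦ X * g + d`. At a double root `β` of `Q`
outside the unit circle these steps are expanding, so `g(β)` and `g'(β)` lie in a fixed bounded
region. For `Q = (X ^ 3 - X + 1) ^ 2` the conjugates of the real root `β` lie inside the unit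
circle, so with digits in `{0, 1}` only finitely many pairs `(g(β), g'(β))` in `ℤ[β]` can occur;
enumerating them from the leading coefficient `1`, every branch leaves the region.
-/

/-- `IsMultiplePrefix D Q g` says that appending finitely many further coefficients from `D` below
the coefficients of `g` produces a multiple of `Q`. Appending `d` is the Horner step
`g ↦ X * g + C d`. -/
inductive IsMultiplePrefix {R : Type*} [CommSemiring R] (D : Set R) (Q : R[X]) : R[X] → Prop
  | of_dvd {g : R[X]} : Q ∣ g → IsMultiplePrefix D Q g
  | of_append {g : R[X]} {d : R} :
      d ∈ D → IsMultiplePrefix D Q (X * g + C d) → IsMultiplePrefix D Q g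

namespace IsMultiplePrefix

variable {R : Type*} [CommSemiring R] {D : Set R} {Q g p : R[X]}

theorem exists_append (h0 : 0 ∈ D) (h : IsMultiplePrefix D Q g) :
    ∃ d ∈ D, IsMultiplePrefix D Q (X * g + C d) := by
  cases h with
  | of_dvd hQ => exact ⟨0, h0, of_dvd (by simpa only [C_0, add_zero] using hQ.mul_left X)⟩
  | of_append hd h => exact ⟨_, hd, h⟩

theorem C_leadingCoeff (hD : ∀ i, p.coeff i ∈ D) (h : IsMultiplePrefix D Q p) :
    IsMultiplePrefix D Q (C p.leadingCoeff) := by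
  induction hn : p.natDegree generalizing p with
  | zero => rwa [leadingCoeff, hn, ← eq_C_of_natDegree_eq_zero hn]
  | succ n ih =>
    have hdeg : p.divX.natDegree = n := by rw [natDegree_divX_eq_natDegree_tsub_one, hn]; rfl
    have hlead : p.divX.leadingCoeff = p.leadingCoeff := by
      rw [leadingCoeff, leadingCoeff, hdeg, hn, coeff_divX]
    rw [← hlead]
    exact ih (fun i => by simpa only [coeff_divX] using hD (i + 1))
      (of_append (hD 0) (by rwa [X_mul_divX_add])) hdeg

variable {K : Type*} [NormedField K] [Algebra R K] {β : K} {M : ℝ}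

theorem norm_aeval_le (hβ : 1 < ‖β‖) (hM : 0 ≤ M) (hD : ∀ d ∈ D, ‖algebraMap R K d‖ ≤ M)
    (hQ : aeval β Q = 0) (h : IsMultiplePrefix D Q g) : ‖aeval β g‖ ≤ M / (‖β‖ - 1) := by
  have hpos : 0 < ‖β‖ - 1 := sub_pos.2 hβ
  induction h with
  | of_dvd hdvd =>
    rw [aeval_eq_zero_of_dvd_aeval_eq_zero hdvd hQ, norm_zero]
    positivity
  | @of_append g d hd _ ih =>
    have hstep : β * aeval β g = aeval β (X * g + C d) - algebraMap R K d := by simp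
    refine le_of_mul_le_mul_left ?_ (zero_lt_one.trans hβ)
    calc ‖β‖ * ‖aeval β g‖ = ‖aeval β (X * g + C d) - algebraMap R K d‖ := by
          rw [← hstep, norm_mul]
      _ ≤ M / (‖β‖ - 1) + M := (norm_sub_le _ _).trans (add_le_add ih (hD d hd))
      _ = ‖β‖ * (M / (‖β‖ - 1)) := by field_simp; ring

theorem norm_aeval_derivative_le (hβ : 1 < ‖β‖) (hM : 0 ≤ M)
    (hD : ∀ d ∈ D, ‖algebraMap R K d‖ ≤ M) (hQ : aeval β Q = 0) (hQ' : aeval β (derivative Q) = 0)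
    (h : IsMultiplePrefix D Q g) : ‖aeval β (derivative g)‖ ≤ M / (‖β‖ - 1) ^ 2 := by
  have hpos : 0 < ‖β‖ - 1 := sub_pos.2 hβ
  induction h with
  | of_dvd hdvd =>
    obtain ⟨k, rfl⟩ := hdvd
    have hzero : aeval β (derivative (Q * k)) = 0 := by simp [derivative_mul, hQ, hQ']
    rw [hzero, norm_zero]
    positivity
  | @of_append g d hd h ih =>
    have hstep : β * aeval β (derivative g) =
        aeval β (derivative (X * g + C d)) - aeval β g := by simp
    refine le_of_mul_le_mul_left ?_ (zero_lt_one.trans hβ)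
    calc ‖β‖ * ‖aeval β (derivative g)‖
        = ‖aeval β (derivative (X * g + C d)) - aeval β g‖ := by rw [← hstep, norm_mul]
      _ ≤ M / (‖β‖ - 1) ^ 2 + M / (‖β‖ - 1) :=
          (norm_sub_le _ _).trans (add_le_add ih ((of_append hd h).norm_aeval_le hβ hM hD hQ))
      _ = ‖β‖ * (M / (‖β‖ - 1) ^ 2) := by field_simp; ring

end IsMultiplePrefix

/-- The element `c₀ + c₁ β + c₂ β ^ 2` of `ℤ[β]`, where `β` is the real root of `X ^ 3 - X + 1`,
in coordinates, so that the search below is a computation with integers. -/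
structure CubicInt where
  c₀ : ℤ
  c₁ : ℤ
  c₂ : ℤ

namespace CubicInt

/-- The real number with the given coordinates with respect to `1, β, β ^ 2`. -/
def eval (β : ℝ) (z : CubicInt) : ℝ := z.c₀ + z.c₁ * β + z.c₂ * β ^ 2

/-- The coordinates of `β * z + y`, reduced by `β ^ 3 = β - 1`. -/
def rootMulAdd (z y : CubicInt) : CubicInt :=
  ⟨y.c₀ - z.c₂, y.c₁ + z.c₀ + z.c₂, y.c₂ + z.c₁⟩

/-- A necessary condition for `|z| ≤ B`, using only `β = -1.3 ± 0.1` and `β ^ 2 = 1.8 ± 0.1`. -/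
def maybeAbsLE (B : ℤ) (z : CubicInt) : Bool :=
  |10 * z.c₀ - 13 * z.c₁ + 18 * z.c₂| ≤ 10 * B + |z.c₁| + |z.c₂|

/-- The search: whether `n` further digits from `{0, 1}` can be appended to a polynomial with value
`v` and derivative `w` at `β` so that all values pass the test for `|v| ≤ 4` and all derivatives
the test for `|w| ≤ 10`. The bounds are above `1 / (|β| - 1)` and `1 / (|β| - 1) ^ 2`. -/
def survives : ℕ → CubicInt → CubicInt → Bool
  | 0, _, _ => true
  | n + 1, v, w => v.maybeAbsLE 4 && w.maybeAbsLE 10 &&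
      (survives n (v.rootMulAdd ⟨0, 0, 0⟩) (w.rootMulAdd v) ||
        survives n (v.rootMulAdd ⟨1, 0, 0⟩) (w.rootMulAdd v))

variable {β : ℝ}

theorem eval_rootMulAdd (hβ : β ^ 3 - β + 1 = 0) (z y : CubicInt) :
    (z.rootMulAdd y).eval β = β * z.eval β + y.eval β := by
  simp only [eval, rootMulAdd]
  push_cast
  linear_combination (-z.c₂ : ℝ) * hβ

theorem maybeAbsLE_of_abs_eval_le (h₁ : |β + 1.3| ≤ 0.1) (h₂ : |β ^ 2 - 1.8| ≤ 0.1)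
    {B : ℤ} {z : CubicInt} (h : |z.eval β| ≤ B) : z.maybeAbsLE B = true := by
  have happrox : (10 * z.c₀ - 13 * z.c₁ + 18 * z.c₂ : ℝ) =
      10 * z.eval β - 10 * (z.c₁ * (β + 1.3)) - 10 * (z.c₂ * (β ^ 2 - 1.8)) := by
    rw [eval]; ring
  have herr₁ : |z.c₁ * (β + 1.3)| ≤ |(z.c₁ : ℝ)| * 0.1 := by rw [abs_mul]; gcongr
  have herr₂ : |z.c₂ * (β ^ 2 - 1.8)| ≤ |(z.c₂ : ℝ)| * 0.1 := by rw [abs_mul]; gcongr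
  have hreal : |(10 * z.c₀ - 13 * z.c₁ + 18 * z.c₂ : ℝ)| ≤
      10 * B + |(z.c₁ : ℝ)| + |(z.c₂ : ℝ)| := by
    rw [happrox]
    rw [abs_le] at h herr₁ herr₂ ⊢
    constructor <;> linarith
  rw [maybeAbsLE, decide_eq_true_iff]
  exact_mod_cast hreal

theorem maybeAbsLE_of_isMultiplePrefix (hmem : β ∈ Set.Icc (-1.33) (-1.32)) {Q g : ℤ[X]}
    (hQ : aeval β Q = 0) (hQ' : aeval β (derivative Q) = 0) (hg : IsMultiplePrefix {0, 1} Q g)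
    {v w : CubicInt} (hv : aeval β g = v.eval β) (hw : aeval β (derivative g) = w.eval β) :
    v.maybeAbsLE 4 = true ∧ w.maybeAbsLE 10 = true := by
  obtain ⟨hlow, hhigh⟩ := hmem
  have h₁ : |β + 1.3| ≤ 0.1 := by rw [abs_le]; constructor <;> linarith
  have h₂ : |β ^ 2 - 1.8| ≤ 0.1 := by rw [abs_le]; constructor <;> nlinarith
  have hnorm : 1.32 ≤ ‖β‖ := by rw [Real.norm_eq_abs]; exact le_abs.2 (.inr (by linarith))
  have hone : 1 < ‖β‖ := by linarith
  have hD : ∀ d ∈ ({0, 1} : Set ℤ), ‖algebraMap ℤ ℝ d‖ ≤ 1 := by rintro d (rfl | rfl) <;> simp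
  refine ⟨maybeAbsLE_of_abs_eval_le h₁ h₂ ?_, maybeAbsLE_of_abs_eval_le h₁ h₂ ?_⟩
  · calc |v.eval β| = ‖aeval β g‖ := by rw [hv, Real.norm_eq_abs]
      _ ≤ 1 / (‖β‖ - 1) := hg.norm_aeval_le hone zero_le_one hD hQ
      _ ≤ (4 : ℤ) := by rw [div_le_iff₀ (by linarith)]; push_cast; linarith
  · calc |w.eval β| = ‖aeval β (derivative g)‖ := by rw [hw, Real.norm_eq_abs]
      _ ≤ 1 / (‖β‖ - 1) ^ 2 := hg.norm_aeval_derivative_le hone zero_le_one hD hQ hQ'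
      _ ≤ (10 : ℤ) := by rw [div_le_iff₀ (by nlinarith)]; push_cast; nlinarith

theorem survives_of_isMultiplePrefix (hβ : β ^ 3 - β + 1 = 0) (hmem : β ∈ Set.Icc (-1.33) (-1.32))
    {Q g : ℤ[X]} (hQ : aeval β Q = 0) (hQ' : aeval β (derivative Q) = 0)
    (hg : IsMultiplePrefix {0, 1} Q g) {v w : CubicInt} (hv : aeval β g = v.eval β)
    (hw : aeval β (derivative g) = w.eval β) (n : ℕ) : survives n v w = true := by
  induction n generalizing g v w with
  | zero => rfl
  | succ n ih =>
    obtain ⟨hvle, hwle⟩ := maybeAbsLE_of_isMultiplePrefix hmem hQ hQ' hg hv hw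
    obtain ⟨d, hd, happend⟩ := hg.exists_append (Set.mem_insert 0 {1})
    have hvalue : aeval β (X * g + C d) = (v.rootMulAdd ⟨d, 0, 0⟩).eval β := by
      rw [eval_rootMulAdd hβ]
      simp [hv, eval]
    have hderiv : aeval β (derivative (X * g + C d)) = (w.rootMulAdd v).eval β := by
      simp [eval_rootMulAdd hβ, hv, hw, add_comm]
    have hnext := ih happend hvalue hderiv
    simp only [survives, hvle, hwle, Bool.true_and, Bool.or_eq_true]
    rcases hd with rfl | rfl
    exacts [.inl hnext, .inr hnext]

theorem survives_one_eq_false : survives 23 ⟨1, 0, 0⟩ ⟨0, 0, 0⟩ = false := by decide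

end CubicInt

theorem exists_root_X_pow_three_sub_X_add_one :
    ∃ β ∈ Set.Icc (-1.33 : ℝ) (-1.32), β ^ 3 - β + 1 = 0 := by
  have hcont : ContinuousOn (fun x : ℝ => x ^ 3 - x + 1) (Set.Icc (-1.33) (-1.32)) := by fun_prop
  exact intermediate_value_Icc (by norm_num) hcont (by constructor <;> norm_num)

theorem not_X_pow_three_sub_X_add_one_sq_dvd {p : ℤ[X]} (hp : p ≠ 0)
    (hcoeff : ∀ i, p.coeff i ∈ ({0, 1} : Set ℤ)) : ¬ (X ^ 3 - X + 1) ^ 2 ∣ p := by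
  intro hdvd
  obtain ⟨β, hmem, hβ⟩ := exists_root_X_pow_three_sub_X_add_one
  have hlead : p.leadingCoeff = 1 :=
    (hcoeff p.natDegree).resolve_left (leadingCoeff_ne_zero.2 hp)
  have hprefix : IsMultiplePrefix {0, 1} ((X ^ 3 - X + 1) ^ 2) (1 : ℤ[X]) := by
    simpa only [hlead, C_1] using (IsMultiplePrefix.of_dvd hdvd).C_leadingCoeff hcoeff
  have hsurvives := CubicInt.survives_of_isMultiplePrefix hβ hmem
    (by simp [hβ]) (by simp [derivative_pow, hβ]) hprefix
    (v := ⟨1, 0, 0⟩) (w := ⟨0, 0, 0⟩) (by simp [CubicInt.eval]) (by simp [CubicInt.eval]) 23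
  exact Bool.false_ne_true (CubicInt.survives_one_eq_false.symm.trans hsurvives)

theorem isLittlewood_sum_range {n : ℕ} (hn : n ≠ 0) {a : ℕ → ℤ}
    (ha : ∀ i < n, a i ∈ ({-1, 1} : Set ℤ)) :
    IsLittlewood (∑ i ∈ Finset.range n, C (a i) * X ^ i) := by
  intro i hi
  have hdeg : (∑ i ∈ Finset.range n, C (a i) * X ^ i).natDegree ≤ n - 1 :=
    natDegree_sum_le_of_forall_le _ _ fun j hj =>
      (natDegree_C_mul_X_pow_le _ _).trans (Nat.le_sub_one_of_lt (Finset.mem_range.1 hj))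
  have hin : i < n := by lia
  simpa [finsetSum_coeff, coeff_C_mul_X_pow, hin] using ha i hin

-- Modulo 2 every Littlewood polynomial of degree `d` is `(X ^ (d + 1) - 1) / (X - 1)`, which is
-- divisible by this product only if `42 ∣ d + 1`; so 41 is the least possible degree.
theorem exists_isLittlewood_dvd :
    ∃ L : ℤ[X], IsLittlewood L ∧ (X ^ 2 + X + 1) * (X ^ 3 - X + 1) ^ 2 ∣ L := by
  let minusExponents : Finset ℕ := {1, 4, 8, 9, 12, 14, 20, 23, 25, 31, 32, 33, 34, 36, 39}
  let sign : ℕ → ℤ := fun i => if i ∈ minusExponents then -1 else 1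
  refine ⟨∑ i ∈ Finset.range 42, C (sign i) * X ^ i, isLittlewood_sum_range (by decide) ?_, ?_⟩
  · intro i _
    by_cases hi : i ∈ minusExponents <;> simp [sign, hi]
  · use X ^ 33 + X ^ 30 - X ^ 29 - X ^ 26 - X ^ 25 - X ^ 23 + X ^ 22 + 2 * X ^ 21 + X ^ 20
      + 2 * X ^ 19 - X ^ 17 - 2 * X ^ 16 - X ^ 15 - X ^ 14 + X ^ 13 + X ^ 12 + 2 * X ^ 11 + X ^ 10
      + X ^ 9 - X ^ 7 - X ^ 6 - X ^ 5 - X ^ 4 + X ^ 3 + X ^ 2 + 1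
    simp +decide only [Finset.sum_range_succ, Finset.sum_range_zero, sign, minusExponents,
      if_true, if_false, map_neg, map_one]
    ring

theorem X_sq_add_X_add_one_mul_sq_eq {R : Type*} [CommRing R] :
    ((X ^ 2 + X + 1) * (X ^ 3 - X + 1) ^ 2 : R[X]) =
      X ^ 8 + X ^ 7 - X ^ 6 + X ^ 4 + X ^ 3 - X + 1 := by
  ring

theorem isBorwein_X_pow_eight_add :
    IsBorwein (X ^ 8 + X ^ 7 - X ^ 6 + X ^ 4 + X ^ 3 - X + 1) := by
  refine ⟨fun i => ?_, by simp⟩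
  simp only [coeff_add, coeff_sub, coeff_X_pow, coeff_X, coeff_one]
  by_cases hi : i ≤ 8
  · interval_cases i <;> simp
  · have hne : ∀ k ≤ 8, i ≠ k := by lia
    simp [hne, (hne 1 (by lia)).symm]

/-- The Borwein polynomial
`P = (X^2 + X + 1)(X^3 - X + 1)^2 = X^8 + X^7 - X^6 + X^4 + X^3 - X + 1` divides
no Newman polynomial, but divides some Littlewood polynomial. -/
theorem borwein_square_factor_littlewood_not_newman :
    ((X ^ 2 + X + 1) * (X ^ 3 - X + 1) ^ 2 : Polynomial ℤ) =
      X ^ 8 + X ^ 7 - X ^ 6 + X ^ 4 + X ^ 3 - X + 1 ∧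
    IsBorwein (X ^ 8 + X ^ 7 - X ^ 6 + X ^ 4 + X ^ 3 - X + 1 : Polynomial ℤ) ∧
    (¬ ∃ N : Polynomial ℤ, IsNewman N ∧
      (X ^ 8 + X ^ 7 - X ^ 6 + X ^ 4 + X ^ 3 - X + 1 : Polynomial ℤ) ∣ N) ∧
    (∃ L : Polynomial ℤ, IsLittlewood L ∧
      (X ^ 8 + X ^ 7 - X ^ 6 + X ^ 4 + X ^ 3 - X + 1 : Polynomial ℤ) ∣ L) := by
  refine ⟨X_sq_add_X_add_one_mul_sq_eq, isBorwein_X_pow_eight_add, ?_,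
    X_sq_add_X_add_one_mul_sq_eq (R := ℤ) ▸ exists_isLittlewood_dvd⟩
  rintro ⟨N, ⟨hcoeff, hconst⟩, hdvd⟩
  rw [← X_sq_add_X_add_one_mul_sq_eq] at hdvd
  have hN : N ≠ 0 := by
    rintro rfl
    exact zero_ne_one hconst
  exact not_X_pow_three_sub_X_add_one_sq_dvd hN hcoeff ((dvd_mul_left _ _).trans hdvd)
end

section
/- Every Newman polynomial of degree at most 11 with exactly four nonzero coefficients (i.e., every Newman quadrinomial X^c + X^b + X^a + 1 with 1 ≤ a < b < c ≤ 11) divides some Littlewood polynomial. Consequently, any Newman quadrinomial with no Littlewood multiple must have degree at least 12. -/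
open Polynomial

theorem IsLittlewood.reverse {L : ℤ[X]} (hL : IsLittlewood L) : IsLittlewood L.reverse := by
  intro i hi
  rw [coeff_reverse, revAt_le (hi.trans (reverse_natDegree_le L))]
  exact hL _ (Nat.sub_le _ _)

theorem HasLittlewoodMultiple.reverse {P : ℤ[X]} (hP : HasLittlewoodMultiple P) :
    HasLittlewoodMultiple P.reverse := by
  obtain ⟨_, hL, Q, rfl⟩ := hP
  exact ⟨_, hL.reverse, Q.reverse, reverse_mul_of_domain P Q⟩

/-- The coefficients of `f` in degrees `d, …, natDegree f` lie in `{-1, 1}`. A cofactor is built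
from its leading coefficient downwards, and this is what its product with a polynomial of degree
`d` satisfies along the way. -/
def IsLittlewoodFrom (d : ℕ) (f : ℤ[X]) : Prop :=
  ∀ i, d ≤ i → i ≤ f.natDegree → f.coeff i ∈ ({-1, 1} : Set ℤ)

theorem IsLittlewoodFrom.isLittlewood_of_X_pow_mul {d : ℕ} {f : ℤ[X]} (hf : f ≠ 0)
    (h : IsLittlewoodFrom d (X ^ d * f)) : IsLittlewood f := by
  intro i hi
  have hdeg : i + d ≤ (X ^ d * f).natDegree := by
    rw [natDegree_X_pow_mul d hf]
    exact Nat.add_le_add_right hi d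
  simpa only [coeff_X_pow_mul] using h (i + d) (Nat.le_add_left d i) hdeg

theorem IsLittlewoodFrom.mul_X_mul_add_C {d : ℕ} {P Q : ℤ[X]} {q : ℤ} (hP : P.natDegree ≤ d)
    (h : IsLittlewoodFrom d (P * Q)) (hq : (P * (X * Q + C q)).coeff d ∈ ({-1, 1} : Set ℤ)) :
    IsLittlewoodFrom d (P * (X * Q + C q)) := by
  intro i hi hdeg
  obtain rfl | hlt := hi.eq_or_lt
  · exact hq
  obtain ⟨j, rfl⟩ : ∃ j, i = j + 1 := ⟨i - 1, by omega⟩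
  have hcoeff : (P * (X * Q + C q)).coeff (j + 1) = (P * Q).coeff j := by
    rw [mul_add, coeff_add, coeff_mul_C, coeff_eq_zero_of_natDegree_lt (hP.trans_lt hlt),
      zero_mul, add_zero, mul_left_comm, coeff_X_mul]
  have hle : (P * (X * Q + C q)).natDegree ≤ max (1 + (P * Q).natDegree) P.natDegree := by
    rw [mul_add, mul_left_comm]
    exact natDegree_add_le_of_le (natDegree_mul_le_of_le natDegree_X_le le_rfl)
      (natDegree_mul_C_le P q)
  rw [hcoeff]
  exact h j (Nat.lt_succ_iff.mp hlt) (by omega)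

theorem IsLittlewoodFrom.hasLittlewoodMultiple {d : ℕ} {P Q : ℤ[X]}
    (h : IsLittlewoodFrom d (P * Q)) (hPQ : P * Q ≠ 0) (hlow : ∀ i < d, Q.coeff i = 0) :
    HasLittlewoodMultiple P := by
  obtain ⟨R, rfl⟩ := X_pow_dvd_iff.mpr hlow
  rw [mul_left_comm] at h hPQ
  exact ⟨P * R, h.isLittlewood_of_X_pow_mul (right_ne_zero_of_mul hPQ), dvd_mul_right P R⟩

/-- The polynomial `X ^ c + X ^ b + X ^ a + 1`. -/
noncomputable def quadrinomial (a b c : ℕ) : ℤ[X] :=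
  X ^ c + X ^ b + X ^ a + 1

section Quadrinomial

variable {a b c : ℕ}

theorem natDegree_quadrinomial (hac : a < c) (hbc : b < c) :
    (quadrinomial a b c).natDegree = c := by
  unfold quadrinomial
  compute_degree
  · simp [hbc.ne', hac.ne', hbc.pos.ne']
  all_goals omega

theorem reverse_quadrinomial (hac : a < c) (hbc : b < c) :
    (quadrinomial a b c).reverse = quadrinomial (c - b) (c - a) c := by
  rw [Polynomial.reverse, natDegree_quadrinomial hac hbc, quadrinomial, quadrinomial]
  simp only [reflect_add, reflect_monomial, reflect_one, revAt_le le_rfl, revAt_le hbc.le,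
    revAt_le hac.le, Nat.sub_self, pow_zero]
  ring

theorem coeff_quadrinomial_mul (hac : a ≤ c) (hbc : b ≤ c) (Q : ℤ[X]) :
    (quadrinomial a b c * Q).coeff c =
      Q.coeff (c - b) + Q.coeff (c - a) + Q.coeff c + Q.coeff 0 := by
  simp only [quadrinomial, add_mul, one_mul, coeff_add, coeff_X_pow_mul', if_pos hac, if_pos hbc,
    le_refl, if_true, Nat.sub_self]
  ring

end Quadrinomial

/-- Depth-first search: visit at most `n` nodes, taken from the top of a stack, replacing each one
by its children, until one satisfies `goal`. -/
def dfs {α : Type*} (children : α → List α) (goal : α → Bool) : ℕ → List α → Bool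
  | 0 => fun _ => false
  | n + 1 => fun
    | [] => false
    | x :: stack => goal x || dfs children goal n (children x ++ stack)

theorem exists_goal_of_dfs {α : Type*} {children : α → List α} {goal : α → Bool} {p : α → Prop}
    (hp : ∀ x, p x → ∀ y ∈ children x, p y) {n : ℕ} {stack : List α} (hstack : ∀ x ∈ stack, p x)
    (h : dfs children goal n stack = true) : ∃ x, p x ∧ goal x = true := by
  induction n generalizing stack with
  | zero => simp [dfs] at h
  | succ n ih =>
    cases stack with
    | nil => simp [dfs] at h
    | cons x stack =>
      obtain hx | hrest : goal x = true ∨ dfs children goal n (children x ++ stack) = true := by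
        simpa only [dfs, Bool.or_eq_true] using h
      · exact ⟨x, hstack x List.mem_cons_self, hx⟩
      · refine ih (fun y hy => ?_) hrest
        obtain hy | hy := List.mem_append.mp hy
        · exact hp x (hstack x List.mem_cons_self) y hy
        · exact hstack y (List.mem_cons_of_mem x hy)

/-- `x` encodes the polynomial `Q` with coefficients in `{-1, 0, 1}`: the `i`-th octal digit of `x`
is congruent to `Q.coeff i` modulo `8`, so that `-1` is written as the digit `7`. Base `8` leaves
room to recognise a sum of three coefficients from the sum of their digits. -/
structure IsOctalCode (x : ℕ) (Q : ℤ[X]) : Prop where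
  div_pow_modEq : ∀ i, ((x / 8 ^ i : ℕ) : ℤ) ≡ Q.coeff i [ZMOD 8]
  abs_coeff_le_one : ∀ i, |Q.coeff i| ≤ 1

/-- The sum modulo `8` of the octal digits of `x` in positions `u`, `v` and `w`. -/
def digitSum (u v w x : ℕ) : ℕ :=
  (x / 8 ^ u + x / 8 ^ v + x / 8 ^ w) % 8

namespace IsOctalCode

variable {x : ℕ} {Q : ℤ[X]}

theorem append (h : IsOctalCode x Q) {d : ℕ} {q : ℤ} (hd : d < 8) (hdq : d ≡ q [ZMOD 8])
    (hq : |q| ≤ 1) : IsOctalCode (8 * x + d) (X * Q + C q) where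
  div_pow_modEq
    | 0 => by
      simp only [pow_zero, Nat.div_one, coeff_add, coeff_X_mul_zero, coeff_C_zero, zero_add]
      push_cast
      exact (Int.modEq_iff_dvd.mpr ⟨-x, by ring⟩ : (8 * x + d : ℤ) ≡ d [ZMOD 8]).trans hdq
    | i + 1 => by
      have hdiv : (8 * x + d) / 8 ^ (i + 1) = x / 8 ^ i := by
        rw [pow_succ', ← Nat.div_div_eq_div_mul]
        congr 1
        omega
      simpa only [hdiv, coeff_add, coeff_X_mul, coeff_C_succ, add_zero] using h.div_pow_modEq i
  abs_coeff_le_one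
    | 0 => by simpa using hq
    | i + 1 => by
      simpa only [coeff_add, coeff_X_mul, coeff_C_succ, add_zero] using h.abs_coeff_le_one i

theorem one : IsOctalCode 1 1 where
  div_pow_modEq
    | 0 => by simp
    | i + 1 => by simp [Nat.div_eq_of_lt, coeff_one]
  abs_coeff_le_one i := by
    rw [coeff_one]
    split_ifs <;> simp

theorem coeff_eq_zero (h : IsOctalCode x Q) {n i : ℕ} (hx : 8 ^ n ∣ x) (hi : i < n) :
    Q.coeff i = 0 := by
  have hdigit : 8 ∣ x / 8 ^ i :=
    Nat.dvd_div_of_mul_dvd ((pow_succ 8 i ▸ pow_dvd_pow 8 hi).trans hx)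
  have hdvd : (8 : ℤ) ∣ Q.coeff i :=
    (h.div_pow_modEq i).dvd_iff.mp (by exact_mod_cast hdigit)
  exact Int.eq_zero_of_abs_lt_dvd hdvd ((h.abs_coeff_le_one i).trans_lt (by norm_num))

theorem abs_coeff_add_add_le (h : IsOctalCode x Q) (u v w : ℕ) :
    |Q.coeff u + Q.coeff v + Q.coeff w| ≤ 3 :=
  (abs_add_three _ _ _).trans <|
    add_le_add_three (h.abs_coeff_le_one u) (h.abs_coeff_le_one v) (h.abs_coeff_le_one w)

theorem digitSum_eq (h : IsOctalCode x Q) (u v w : ℕ) :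
    (digitSum u v w x : ℤ) = (Q.coeff u + Q.coeff v + Q.coeff w) % 8 := by
  have hsum := ((h.div_pow_modEq u).add (h.div_pow_modEq v)).add (h.div_pow_modEq w)
  unfold digitSum
  exact_mod_cast hsum

end IsOctalCode

/-- The digits coding those `q ∈ {-1, 0, 1}` for which `s + q ∈ {-1, 1}`, where `-3 ≤ s ≤ 3` is
given by its residue modulo `8`. -/
def nextDigits : ℕ → List ℕ
  | 0 => [1, 7]
  | 1 => [0]
  | 2 => [7]
  | 6 => [1]
  | 7 => [0]
  | _ => []

theorem exists_of_mem_nextDigits {r d : ℕ} {s : ℤ} (hs : |s| ≤ 3) (hr : (r : ℤ) = s % 8)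
    (hd : d ∈ nextDigits r) :
    d < 8 ∧ ∃ q : ℤ, |q| ≤ 1 ∧ d ≡ q [ZMOD 8] ∧ s + q ∈ ({-1, 1} : Set ℤ) := by
  have key : ∀ s ∈ Finset.Icc (-3 : ℤ) 3, ∀ d ∈ nextDigits (s % 8).toNat,
      d < 8 ∧ ∃ q ∈ Finset.Icc (-1 : ℤ) 1, d ≡ q [ZMOD 8] ∧ s + q ∈ ({-1, 1} : Finset ℤ) := by
    decide
  rw [← Int.toNat_natCast r, hr] at hd
  simpa [abs_le] using key s (Finset.mem_Icc.mpr (abs_le.mp hs)) d hd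

/-- The codes of the extensions `X * Q + C q`, `q ∈ {-1, 0, 1}`, of the polynomial `Q` coded by
`x`, for which the coefficient of `X ^ c` in `quadrinomial a b c * (X * Q + C q)` is `±1`. -/
def extensions (a b c x : ℕ) : List ℕ :=
  (nextDigits (digitSum (c - b) (c - a) c (8 * x))).map (8 * x + ·)

/-- `x` codes a nonzero `Q` for which all coefficients of `quadrinomial a b c * Q` in degrees
at least `c` are `±1`. -/
def CodesPartialCofactor (a b c x : ℕ) : Prop :=
  ∃ Q : ℤ[X], IsOctalCode x Q ∧ Q ≠ 0 ∧ IsLittlewoodFrom c (quadrinomial a b c * Q)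

theorem CodesPartialCofactor.of_mem_extensions {a b c x y : ℕ} (hac : a < c) (hbc : b < c)
    (hx : CodesPartialCofactor a b c x) (hy : y ∈ extensions a b c x) :
    CodesPartialCofactor a b c y := by
  obtain ⟨Q, hcode, hQ, hlit⟩ := hx
  obtain ⟨d, hd, rfl⟩ := List.mem_map.mp hy
  have hshift : IsOctalCode (8 * x) (X * Q) := by
    simpa using hcode.append (d := 0) (q := 0) (by norm_num) rfl (by norm_num)
  obtain ⟨hd8, q, hq, hdq, hsum⟩ :=
    exists_of_mem_nextDigits (hshift.abs_coeff_add_add_le _ _ _) (hshift.digitSum_eq _ _ _) hd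
  refine ⟨X * Q + C q, hcode.append hd8 hdq hq, ?_, ?_⟩
  · contrapose! hQ
    ext i
    simpa only [coeff_add, coeff_X_mul, coeff_C_succ, add_zero, coeff_zero] using
      congrArg (coeff · (i + 1)) hQ
  · refine hlit.mul_X_mul_add_C (natDegree_quadrinomial hac hbc).le ?_
    rw [coeff_quadrinomial_mul hac.le hbc.le]
    have hpos (i : ℕ) (hi : 0 < i) : (X * Q + C q).coeff i = (X * Q).coeff i := by
      rw [coeff_add, coeff_C_of_ne_zero hi.ne', add_zero]
    rw [hpos _ (Nat.sub_pos_of_lt hbc), hpos _ (Nat.sub_pos_of_lt hac),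
      hpos _ hbc.pos, coeff_add, coeff_X_mul_zero, coeff_C_zero, zero_add]
    exact hsum

theorem codesPartialCofactor_one {a b c : ℕ} (hac : a < c) (hbc : b < c) :
    CodesPartialCofactor a b c 1 := by
  refine ⟨1, .one, one_ne_zero, fun i hi hdeg => ?_⟩
  rw [mul_one] at hdeg ⊢
  rw [natDegree_quadrinomial hac hbc] at hdeg
  obtain rfl := hi.antisymm hdeg
  simp [quadrinomial, coeff_X_pow, coeff_one, hbc.ne', hac.ne', hbc.pos.ne']

theorem CodesPartialCofactor.hasLittlewoodMultiple {a b c x : ℕ} (hac : a < c) (hbc : b < c)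
    (hx : CodesPartialCofactor a b c x) (hlow : 8 ^ c ∣ x) :
    HasLittlewoodMultiple (quadrinomial a b c) := by
  obtain ⟨Q, hcode, hQ, hlit⟩ := hx
  have hP : quadrinomial a b c ≠ 0 :=
    ne_zero_of_natDegree_gt (hbc.trans_eq (natDegree_quadrinomial hac hbc).symm)
  exact hlit.hasLittlewoodMultiple (mul_ne_zero hP hQ) fun i => hcode.coeff_eq_zero hlow

/-- Search, over at most `n` nodes, for a partial cofactor of `quadrinomial a b c` divisible by
`X ^ c`, starting from the constant polynomial `1`. -/
def cofactorSearch (a b c n : ℕ) : Bool :=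
  dfs (extensions a b c) (fun x => (x % 8 ^ c).beq 0) n [1]

theorem hasLittlewoodMultiple_of_cofactorSearch {a b c n : ℕ} (hac : a < c) (hbc : b < c)
    (h : cofactorSearch a b c n = true) : HasLittlewoodMultiple (quadrinomial a b c) := by
  obtain ⟨x, hx, hlow⟩ := exists_goal_of_dfs
    (fun x hx y hy => CodesPartialCofactor.of_mem_extensions hac hbc hx hy)
    (by simpa using codesPartialCofactor_one hac hbc) h
  exact hx.hasLittlewoodMultiple hac hbc (Nat.dvd_of_mod_eq_zero (Nat.beq_eq.mp hlow))

theorem cofactorSearch_of_le_add :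
    ∀ c < 12, ∀ b < c, ∀ a < b, 1 ≤ a → c ≤ a + b → cofactorSearch a b c (2 ^ 13) = true := by
  decide +kernel

theorem hasLittlewoodMultiple_quadrinomial {a b c : ℕ} (ha : 1 ≤ a) (hab : a < b) (hbc : b < c)
    (hc : c ≤ 11) : HasLittlewoodMultiple (quadrinomial a b c) := by
  obtain hle | hle := le_total c (a + b)
  · exact hasLittlewoodMultiple_of_cofactorSearch (hab.trans hbc) hbc
      (cofactorSearch_of_le_add c (by omega) b hbc a hab ha hle)
  · have hcb : c - b < c := by omega
    have hca : c - a < c := by omega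
    have hrev := hasLittlewoodMultiple_of_cofactorSearch hcb hca
      (cofactorSearch_of_le_add c (by omega) (c - a) hca (c - b) (by omega) (by omega) (by omega))
    simpa only [reverse_quadrinomial hcb hca, Nat.sub_sub_self (hab.trans hbc).le,
      Nat.sub_sub_self hbc.le] using hrev.reverse

theorem IsNewman.eq_sum_support {P : ℤ[X]} (hP : IsNewman P) : P = ∑ i ∈ P.support, X ^ i := by
  conv_lhs => rw [as_sum_support_C_mul_X_pow P]
  refine Finset.sum_congr rfl fun i hi => ?_
  obtain h | h := hP.1 i
  · exact absurd h (mem_support_iff.mp hi)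
  · rw [Set.mem_singleton_iff.mp h, C_1, one_mul]

theorem IsNewman.exists_eq_quadrinomial {P : ℤ[X]} (hP : IsNewman P) (h4 : P.support.card = 4) :
    ∃ a b c, 1 ≤ a ∧ a < b ∧ b < c ∧ P = quadrinomial a b c := by
  let e := P.support.orderEmbOfFin h4
  have he : StrictMono e := e.strictMono
  have he0 : e 0 = 0 := by
    have h0 : 0 ∈ P.support := mem_support_iff.mpr (by simp [hP.2])
    exact (Finset.orderEmbOfFin_zero h4 (by norm_num)).trans
      (Nat.le_zero.mp (P.support.min'_le 0 h0))
  refine ⟨e 1, e 2, e 3, ?_, he (by decide), he (by decide), ?_⟩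
  · exact Nat.one_le_iff_ne_zero.mpr (he0 ▸ he.injective.ne (by decide))
  calc
    P = ∑ i ∈ P.support, X ^ i := hP.eq_sum_support
    _ = ∑ k, X ^ e k := by
      rw [← Finset.map_orderEmbOfFin_univ P.support h4, Finset.sum_map]
      rfl
    _ = quadrinomial (e 1) (e 2) (e 3) := by
      rw [Fin.sum_univ_four, he0, quadrinomial]
      ring

/-- Every Newman quadrinomial `X^c + X^b + X^a + 1` with `1 ≤ a < b < c ≤ 11`
divides some Littlewood polynomial; consequently every Newman quadrinomial with
no Littlewood multiple has degree at least 12. -/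
theorem newman_quadrinomial_deg_le_eleven_littlewood :
    (∀ a b c : ℕ, 1 ≤ a → a < b → b < c → c ≤ 11 →
      ∃ L : Polynomial ℤ, IsLittlewood L ∧
        (X ^ c + X ^ b + X ^ a + 1 : Polynomial ℤ) ∣ L) ∧
    (∀ P : Polynomial ℤ, IsNewman P → P.support.card = 4 →
      (¬ ∃ L : Polynomial ℤ, IsLittlewood L ∧ P ∣ L) → 12 ≤ P.natDegree) := by
  refine ⟨fun a b c => hasLittlewoodMultiple_quadrinomial, fun P hP h4 hnone => ?_⟩
  obtain ⟨a, b, c, ha, hab, hbc, rfl⟩ := hP.exists_eq_quadrinomial h4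
  by_contra! hdeg
  rw [natDegree_quadrinomial (hab.trans hbc) hbc] at hdeg
  exact hnone (hasLittlewoodMultiple_quadrinomial ha hab hbc (Nat.le_of_lt_succ hdeg))
end
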